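/- arXiv:math-ph/0609037 — 2 statements merged into one kernel-verified Lean document; each statement's English description precedes it below -/
import Mathlib

section
/- Assume the maximal solution J of the averaged system exists on [0,U) for some U ∈ (0,+∞]. Let R : [0,U) → T¹₁(ℝ^d) and K : [0,U) → ℝ^d be the solutions of dR/dτ = (∂f̄/∂I)(J(τ)) R, R(0) = 1_d, and dK/dτ = (∂f̄/∂I)(J(τ)) K + p̄(J(τ)), K(0) = 0. Assume the solution (I,Θ) of the perturbed system exists for t ∈ [0,U/ε), with the segment [J(εt), I(t)] contained in Λ (i.e. (J(εt), I(t)−J(εt)) ∈ Λ†) for all such t. Define L(t) := (1/ε)[I(t) − J(εt)]. Then for all t ∈ [0,U/ε): L(t) = s(I(t),Θ(t)) − R(εt) s(I₀,θ₀) − K(εt) − ε ( w(I(t),Θ(t)) − (∂f̄/∂I)(J(εt)) v(I(t),Θ(t)) ) + ε² R(εt) ∫₀^t R(εt')^{-1} [ u(I(t'),Θ(t')) − (∂f̄/∂I)(J(εt')) (w+q)(I(t'),Θ(t')) − 𝓜(J(εt')) v(I(t'),Θ(t')) − 𝓖(J(εt'), εL(t')) L(t') + (1/2) 𝓗(J(εt'),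 εL(t')) L(t') L(t') ] dt'. -/
open scoped Real
open MeasureTheory Matrix

/-!
Along the perturbed orbit a homological equation `φ = φbar + ω ∂ψ/∂θ` reads
`φ - φbar = dψ/dt - ε δψ`: the oscillating part of `φ` is a total derivative up to `O(ε)`. The
derivative of `L` is `f(I, Θ) - fbar(J)`, and applying this with the pairs `(f, s)`, `(s, v)`,
`(p, w)`, while expanding `fbar` and `pbar` around `J`, shows that
`L - s + R s(I₀, θ₀) + K + ε (w - F'(J) v)` vanishes at time `0` and solves the linear equation
`dy/dt = ε F'(J) y` up to a source of order `ε²`. Variation of constants, with `R` as fundamental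
matrix, gives the integral equation. The source is continuous because the homological equations
and the vanishing or zero-mean normalizations express `s`, `v`, `w` as primitives in the angle.
-/

open Set Filter Function

open scoped NNReal Topology

/-! ### Integrals and primitives depending on a parameter -/

section ParametricIntegral

variable {X E F : Type*} [TopologicalSpace X] [NormedAddCommGroup E] [NormedSpace ℝ E]
  [NormedAddCommGroup F]

theorem exists_eventually_forall_norm_le {Y : Type*} [TopologicalSpace Y] {S : Set X}
    (hS : IsOpen S) {h : X × Y → F} (hh : ContinuousOn h (S ×ˢ univ)) {k : Set Y}
    (hk : IsCompact k) {x₀ : X} (hx₀ : x₀ ∈ S) :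
    ∃ C, ∀ᶠ x in 𝓝 x₀, ∀ y ∈ k, ‖h (x, y)‖ ≤ C := by
  obtain ⟨C, hC⟩ := hk.exists_bound_of_continuousOn (f := fun y => h (x₀, y))
    (hh.comp_continuous (by fun_prop) fun y => ⟨hx₀, mem_univ y⟩).continuousOn
  refine ⟨C + 1, hk.eventually_forall_of_forall_eventually fun y hy => ?_⟩
  have hcont : ContinuousAt h (x₀, y) :=
    hh.continuousAt ((hS.prod isOpen_univ).mem_nhds ⟨hx₀, mem_univ y⟩)
  exact (hcont.norm.eventually_lt continuousAt_const
    ((hC y hy).trans_lt (lt_add_one C))).mono fun _ hz => hz.le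

variable [NormedSpace ℝ F]

theorem continuousOn_intervalIntegral_of_continuousOn_prod [FirstCountableTopology X]
    {S : Set X} (hS : IsOpen S) {h : X × ℝ → F} (hh : ContinuousOn h (S ×ˢ univ)) (a b : ℝ) :
    ContinuousOn (fun x => ∫ t in a..b, h (x, t)) S := by
  intro x₀ hx₀
  obtain ⟨C, hC⟩ := exists_eventually_forall_norm_le hS hh (isCompact_uIcc (a := a) (b := b)) hx₀
  have hline : ∀ x ∈ S, Continuous fun t => h (x, t) := fun x hx =>
    hh.comp_continuous (by fun_prop) fun t => ⟨hx, mem_univ t⟩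
  refine (intervalIntegral.continuousAt_of_dominated_interval (bound := fun _ => C) ?_ ?_
    intervalIntegrable_const (.of_forall fun t _ => ?_)).continuousWithinAt
  · filter_upwards [hS.mem_nhds hx₀] with x hx using (hline x hx).aestronglyMeasurable
  · filter_upwards [hC] with x hx using .of_forall fun t ht => hx t (uIoc_subset_uIcc ht)
  · exact (hh.continuousAt ((hS.prod isOpen_univ).mem_nhds ⟨hx₀, mem_univ t⟩)).comp
      (f := fun x => (x, t)) (by fun_prop)

theorem hasFDerivAt_intervalIntegral_of_contDiffOn_prod {S : Set E} (hS : IsOpen S)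
    {h : E × ℝ → F} (hh : ContDiffOn ℝ 1 h (S ×ˢ univ)) (a b : ℝ) {x₀ : E} (hx₀ : x₀ ∈ S) :
    HasFDerivAt (fun x => ∫ t in a..b, h (x, t))
      (∫ t in a..b, (fderiv ℝ h (x₀, t)).comp (.inl ℝ E ℝ)) x₀ := by
  have hSo : IsOpen (S ×ˢ (univ : Set ℝ)) := hS.prod isOpen_univ
  have hD : ContinuousOn (fun z => (fderiv ℝ h z).comp (.inl ℝ E ℝ)) (S ×ˢ univ) :=
    (hh.continuousOn_fderiv_of_isOpen hSo le_rfl).clm_comp continuousOn_const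
  obtain ⟨C, hC⟩ := exists_eventually_forall_norm_le hS hD (isCompact_uIcc (a := a) (b := b)) hx₀
  have hline : ∀ x ∈ S, Continuous fun t => h (x, t) := fun x hx =>
    hh.continuousOn.comp_continuous (by fun_prop) fun t => ⟨hx, mem_univ t⟩
  refine intervalIntegral.hasFDerivAt_integral_of_dominated_of_fderiv_le
    (F' := fun x t => (fderiv ℝ h (x, t)).comp (.inl ℝ E ℝ)) (bound := fun _ => C)
    (hC.and (hS.eventually_mem hx₀)) ?_ ((hline x₀ hx₀).intervalIntegrable _ _) ?_
    (.of_forall fun t ht x hx => hx.1 t (uIoc_subset_uIcc ht)) intervalIntegrable_const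
    (.of_forall fun t _ x hx => ?_)
  · filter_upwards [hS.mem_nhds hx₀] with x hx using (hline x hx).aestronglyMeasurable
  · exact (hD.comp_continuous (f := fun t : ℝ => (x₀, t)) (by fun_prop)
      fun t => ⟨hx₀, mem_univ t⟩).aestronglyMeasurable
  · exact ((hh.differentiableOn one_ne_zero).differentiableAt
      (hSo.mem_nhds ⟨hx.2, mem_univ t⟩)).hasFDerivAt.comp x (hasFDerivAt_prodMk_left x t)

end ParametricIntegral

universe uE uF

-- The induction replaces `F` by `E →L[ℝ] F`, so `F` has to live in a universe above that of `E`.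
theorem contDiffOn_intervalIntegral_of_max_universe {E : Type uE} [NormedAddCommGroup E]
    [NormedSpace ℝ E] {S : Set E} (hS : IsOpen S) (a b : ℝ) (n : ℕ) :
    ∀ {F : Type (max uE uF)} [NormedAddCommGroup F] [NormedSpace ℝ F] {h : E × ℝ → F},
      ContDiffOn ℝ n h (S ×ˢ univ) → ContDiffOn ℝ n (fun x => ∫ t in a..b, h (x, t)) S := by
  induction n with
  | zero =>
    intro F _ _ h hh
    simp only [Nat.cast_zero, contDiffOn_zero] at hh ⊢
    exact continuousOn_intervalIntegral_of_continuousOn_prod hS hh a b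
  | succ n ih =>
    intro F _ _ h hh
    have hderiv := fun x (hx : x ∈ S) =>
      hasFDerivAt_intervalIntegral_of_contDiffOn_prod hS (hh.of_le (by norm_cast; omega)) a b hx
    push_cast at hh ⊢
    rw [contDiffOn_succ_iff_fderiv_of_isOpen (hS.prod isOpen_univ)] at hh
    rw [contDiffOn_succ_iff_fderiv_of_isOpen hS]
    exact ⟨fun x hx => (hderiv x hx).differentiableAt.differentiableWithinAt, by simp,
      (ih (hh.2.2.clm_comp contDiffOn_const)).congr fun x hx => (hderiv x hx).fderiv⟩

theorem contDiffOn_intervalIntegral {E : Type uE} {F : Type uF} [NormedAddCommGroup E]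
    [NormedSpace ℝ E] [NormedAddCommGroup F] [NormedSpace ℝ F] {S : Set E} (hS : IsOpen S)
    {n : ℕ} {h : E × ℝ → F} (hh : ContDiffOn ℝ n h (S ×ˢ univ)) (a b : ℝ) :
    ContDiffOn ℝ n (fun x => ∫ t in a..b, h (x, t)) S := by
  let iso : ULift.{max uE uF} F ≃L[ℝ] F := ContinuousLinearEquiv.ulift
  have hlift := iso.contDiff.comp_contDiffOn
    (contDiffOn_intervalIntegral_of_max_universe.{uE, uF} hS a b n
      (iso.symm.contDiff.comp_contDiffOn hh))
  exact hlift.congr fun x _ => by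
    simp [intervalIntegral, ← ContinuousLinearEquiv.integral_comp_comm]

theorem integral_eq_sub_of_hasDerivAt_snd {X F : Type*} [TopologicalSpace X]
    [NormedAddCommGroup F] [NormedSpace ℝ F] [CompleteSpace F] {S : Set X} {φ ψ : X → ℝ → F}
    (hφ : ∀ x ∈ S, ∀ θ, HasDerivAt (φ x) (ψ x θ) θ)
    (hψ : ContinuousOn (uncurry ψ) (S ×ˢ univ)) {x : X} (hx : x ∈ S) (a b : ℝ) :
    ∫ θ in a..b, ψ x θ = φ x b - φ x a := by
  have hcont : Continuous (ψ x) :=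
    hψ.comp_continuous (f := fun θ => (x, θ)) (by fun_prop) fun θ => ⟨hx, mem_univ θ⟩
  exact intervalIntegral.integral_eq_sub_of_hasDerivAt (fun θ _ => hφ x hx θ)
    (hcont.intervalIntegrable a b)

section Primitive

variable {E F : Type*} [NormedAddCommGroup E] [NormedSpace ℝ E] [NormedAddCommGroup F]
  [NormedSpace ℝ F] {S : Set E} {n : ℕ} {φ ψ : E → ℝ → F}

theorem contDiffOn_primitive_snd (hS : IsOpen S) (hψ : ContDiffOn ℝ n (uncurry ψ) (S ×ˢ univ))
    (a : ℝ) : ContDiffOn ℝ n (fun z : E × ℝ => ∫ θ in a..z.2, ψ z.1 θ) (S ×ˢ univ) := by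
  -- Rescaling to `∫₀¹` moves the variable endpoint into the integrand.
  have hscaled : ContDiffOn ℝ n (fun z : (E × ℝ) × ℝ => ψ z.1.1 (a + (z.1.2 - a) * z.2))
      ((S ×ˢ univ) ×ˢ univ) :=
    hψ.comp (f := fun z : (E × ℝ) × ℝ => (z.1.1, a + (z.1.2 - a) * z.2))
      (ContDiff.contDiffOn (by fun_prop)) fun z hz => ⟨hz.1.1, mem_univ _⟩
  have hlength : ContDiffOn ℝ n (fun z : E × ℝ => z.2 - a) (S ×ˢ univ) :=
    ContDiff.contDiffOn (by fun_prop)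
  refine (hlength.smul (contDiffOn_intervalIntegral (hS.prod isOpen_univ) hscaled 0 1)).congr
    fun z _ => ?_
  simp [intervalIntegral.smul_integral_comp_add_mul (fun θ => ψ z.1 θ)]

variable [CompleteSpace F]

theorem contDiffOn_uncurry_of_hasDerivAt_snd (hS : IsOpen S)
    (hφ : ∀ x ∈ S, ∀ θ, HasDerivAt (φ x) (ψ x θ) θ)
    (hψ : ContDiffOn ℝ n (uncurry ψ) (S ×ˢ univ)) {θ₀ : ℝ}
    (hφ₀ : ContDiffOn ℝ n (fun x => φ x θ₀) S) : ContDiffOn ℝ n (uncurry φ) (S ×ˢ univ) := by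
  refine ((hφ₀.comp contDiff_fst.contDiffOn fun z hz => hz.1).add
    (contDiffOn_primitive_snd hS hψ θ₀)).congr fun z hz => ?_
  simp [integral_eq_sub_of_hasDerivAt_snd hφ hψ.continuousOn hz.1, uncurry]

theorem contDiffOn_uncurry_of_hasDerivAt_snd_of_integral_eq_zero (hS : IsOpen S)
    (hφ : ∀ x ∈ S, ∀ θ, HasDerivAt (φ x) (ψ x θ) θ)
    (hψ : ContDiffOn ℝ n (uncurry ψ) (S ×ˢ univ)) {a b : ℝ} (hab : a ≠ b)
    (hφ₀ : ∀ x ∈ S, ∫ θ in a..b, φ x θ = 0) : ContDiffOn ℝ n (uncurry φ) (S ×ˢ univ) := by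
  -- The zero mean recovers `φ x a` as minus the mean of the primitive of `ψ x` from `a`.
  refine contDiffOn_uncurry_of_hasDerivAt_snd hS hφ hψ (θ₀ := a) <|
    ((contDiffOn_const (c := -(b - a)⁻¹)).smul (contDiffOn_intervalIntegral hS
      (contDiffOn_primitive_snd hS hψ a) a b)).congr fun x hx => ?_
  have hφc : Continuous (φ x) := continuous_iff_continuousAt.2 fun θ => (hφ x hx θ).continuousAt
  simp only [Pi.smul_apply', integral_eq_sub_of_hasDerivAt_snd hφ hψ.continuousOn hx]
  rw [intervalIntegral.integral_sub (hφc.intervalIntegrable _ _) intervalIntegrable_const,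
    hφ₀ x hx, intervalIntegral.integral_const, zero_sub, smul_neg, neg_smul, neg_neg,
    inv_smul_smul₀ (sub_ne_zero.2 hab.symm)]

end Primitive

/-! ### Homological equations -/

section Homological

variable {E F : Type*} [NormedAddCommGroup E] [NormedSpace ℝ E] [NormedAddCommGroup F]
  [NormedSpace ℝ F]

theorem hasFDerivAt_uncurry_of_partial {φ : E → ℝ → F} {x : E} {θ : ℝ}
    (hφ : DifferentiableAt ℝ (uncurry φ) (x, θ)) {A : E →L[ℝ] F} {B : F}
    (hA : HasFDerivAt (fun x' => φ x' θ) A x) (hB : HasDerivAt (φ x) B θ) :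
    HasFDerivAt (uncurry φ) (A.coprod (.toSpanSingleton ℝ B)) (x, θ) := by
  have hinl := hφ.hasFDerivAt.comp x (hasFDerivAt_prodMk_left (𝕜 := ℝ) x θ)
  have hinr := hφ.hasFDerivAt.comp θ (hasFDerivAt_prodMk_right (𝕜 := ℝ) x θ)
  rw [hA.unique hinl, hB.hasFDerivAt.unique hinr]
  simpa using hφ.hasFDerivAt

/-- `ψ` solves the homological equation `φ = φbar + ω ∂ψ/∂θ` over `Λ`, and `δψ` is the derivative
`(∂ψ/∂I) f + (∂ψ/∂θ) g` of `ψ` along the perturbation `(f, g)`. The partial derivatives of `ψ` are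
the existential witnesses `A = ∂ψ/∂I` and `B = ∂ψ/∂θ`. In the averaging scheme the triples
`(φ, ψ, δψ)` are `(f, s, p)`, `(s, v, q)` and `(p, w, u)`. -/
def IsHomologicalSolution (Λ : Set E) (ω : E → ℝ) (f : E → ℝ → E) (g : E → ℝ → ℝ)
    (φ : E → ℝ → F) (φbar : E → F) (ψ δψ : E → ℝ → F) : Prop :=
  ∀ I ∈ Λ, ∀ θ, ∃ (A : E →L[ℝ] F) (B : F),
    HasFDerivAt (fun I' => ψ I' θ) A I ∧ HasDerivAt (ψ I) B θ ∧
      φ I θ = φbar I + ω I • B ∧ δψ I θ = A (f I θ) + g I θ • B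

namespace IsHomologicalSolution

variable {Λ : Set E} {ω : E → ℝ} {f : E → ℝ → E} {g : E → ℝ → ℝ} {φ ψ δψ : E → ℝ → F}
  {φbar : E → F} {n : ℕ}

theorem hasDerivAt (h : IsHomologicalSolution Λ ω f g φ φbar ψ δψ) {I : E} (hI : I ∈ Λ) (θ : ℝ) :
    HasDerivAt (ψ I) (deriv (ψ I) θ) θ := by
  obtain ⟨_, _, _, hB, _⟩ := h I hI θ
  exact hB.differentiableAt.hasDerivAt

theorem eq_add_smul_deriv (h : IsHomologicalSolution Λ ω f g φ φbar ψ δψ) {I : E} (hI : I ∈ Λ)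
    (θ : ℝ) : φ I θ = φbar I + ω I • deriv (ψ I) θ := by
  obtain ⟨_, _, _, hB, hφ, _⟩ := h I hI θ
  rw [hB.deriv, hφ]

theorem contDiffOn_deriv (h : IsHomologicalSolution Λ ω f g φ φbar ψ δψ)
    (hω : ContDiffOn ℝ n ω Λ) (hω₀ : ∀ I ∈ Λ, ω I ≠ 0)
    (hφ : ContDiffOn ℝ n (uncurry φ) (Λ ×ˢ univ)) (hφbar : ContDiffOn ℝ n φbar Λ) :
    ContDiffOn ℝ n (uncurry fun I θ => deriv (ψ I) θ) (Λ ×ˢ univ) := by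
  have hfst : MapsTo Prod.fst (Λ ×ˢ (univ : Set ℝ)) Λ := fun z hz => hz.1
  refine (((hω.inv hω₀).comp contDiff_fst.contDiffOn hfst).smul
    (hφ.sub (hφbar.comp contDiff_fst.contDiffOn hfst))).congr fun z hz => ?_
  simp [uncurry, h.eq_add_smul_deriv hz.1 z.2, hω₀ z.1 hz.1]

theorem contDiffOn_lieDeriv (h : IsHomologicalSolution Λ ω f g φ φbar ψ δψ) (hΛ : IsOpen Λ)
    (hψ : ContDiffOn ℝ (n + 1 : ℕ) (uncurry ψ) (Λ ×ˢ univ))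
    (hf : ContDiffOn ℝ n (uncurry f) (Λ ×ˢ univ)) (hg : ContDiffOn ℝ n (uncurry g) (Λ ×ˢ univ)) :
    ContDiffOn ℝ n (uncurry δψ) (Λ ×ˢ univ) := by
  have hΛ' : IsOpen (Λ ×ˢ (univ : Set ℝ)) := hΛ.prod isOpen_univ
  refine ((hψ.fderiv_of_isOpen hΛ' (by norm_cast)).clm_apply (hf.prodMk hg)).congr fun z hz => ?_
  obtain ⟨A, B, hA, hB, -, hδ⟩ := h z.1 hz.1 z.2
  have hdiff := (hψ.differentiableOn (by simp)).differentiableAt (hΛ'.mem_nhds hz)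
  rw [(hasFDerivAt_uncurry_of_partial hdiff hA hB).fderiv]
  simp [uncurry, hδ]

variable [CompleteSpace F]

theorem contDiffOn_of_eq_zero (h : IsHomologicalSolution Λ ω f g φ φbar ψ δψ) (hΛ : IsOpen Λ)
    (hω : ContDiffOn ℝ n ω Λ) (hω₀ : ∀ I ∈ Λ, ω I ≠ 0)
    (hφ : ContDiffOn ℝ n (uncurry φ) (Λ ×ˢ univ)) (hφbar : ContDiffOn ℝ n φbar Λ) {θ₀ : ℝ}
    (hψ : ∀ I ∈ Λ, ψ I θ₀ = 0) : ContDiffOn ℝ n (uncurry ψ) (Λ ×ˢ univ) :=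
  contDiffOn_uncurry_of_hasDerivAt_snd hΛ (fun _ hI θ => h.hasDerivAt hI θ)
    (h.contDiffOn_deriv hω hω₀ hφ hφbar) (contDiffOn_const.congr hψ)

theorem contDiffOn_of_integral_eq_zero (h : IsHomologicalSolution Λ ω f g φ φbar ψ δψ)
    (hΛ : IsOpen Λ) (hω : ContDiffOn ℝ n ω Λ) (hω₀ : ∀ I ∈ Λ, ω I ≠ 0)
    (hφ : ContDiffOn ℝ n (uncurry φ) (Λ ×ˢ univ)) (hφbar : ContDiffOn ℝ n φbar Λ) {a b : ℝ}
    (hab : a ≠ b) (hψ : ∀ I ∈ Λ, ∫ θ in a..b, ψ I θ = 0) :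
    ContDiffOn ℝ n (uncurry ψ) (Λ ×ˢ univ) :=
  contDiffOn_uncurry_of_hasDerivAt_snd_of_integral_eq_zero hΛ (fun _ hI θ => h.hasDerivAt hI θ)
    (h.contDiffOn_deriv hω hω₀ hφ hφbar) hab hψ

end IsHomologicalSolution

theorem contDiffOn_averaging_functions [CompleteSpace E] {Λ : Set E} (hΛ : IsOpen Λ)
    {ω : E → ℝ} {f s p v q w u : E → ℝ → E} {g : E → ℝ → ℝ} {fbar pbar : E → E} {n : ℕ}
    {a b c θ₀ : ℝ} (hab : a ≠ b)
    (hf : ContDiffOn ℝ (n + 1 : ℕ) (uncurry f) (Λ ×ˢ univ))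
    (hg : ContDiffOn ℝ (n + 1 : ℕ) (uncurry g) (Λ ×ˢ univ))
    (hω : ContDiffOn ℝ (n + 1 : ℕ) ω Λ) (hω₀ : ∀ I ∈ Λ, ω I ≠ 0)
    (hfbar : ∀ I ∈ Λ, fbar I = c • ∫ θ in a..b, f I θ)
    (hs : IsHomologicalSolution Λ ω f g f fbar s p) (hs₀ : ∀ I ∈ Λ, ∫ θ in a..b, s I θ = 0)
    (hpbar : ∀ I ∈ Λ, pbar I = c • ∫ θ in a..b, p I θ)
    (hv : IsHomologicalSolution Λ ω f g s 0 v q) (hv₀ : ∀ I ∈ Λ, v I θ₀ = 0)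
    (hw : IsHomologicalSolution Λ ω f g p pbar w u) (hw₀ : ∀ I ∈ Λ, w I θ₀ = 0) :
    ContDiffOn ℝ (n + 1 : ℕ) fbar Λ ∧ ContDiffOn ℝ (n + 1 : ℕ) (uncurry s) (Λ ×ˢ univ) ∧
      ContDiffOn ℝ n pbar Λ ∧ ContDiffOn ℝ (n + 1 : ℕ) (uncurry v) (Λ ×ˢ univ) ∧
      ContDiffOn ℝ n (uncurry w) (Λ ×ˢ univ) := by
  have hle : (n : WithTop ℕ∞) ≤ (n + 1 : ℕ) := by norm_cast; omega
  have hfbarC := ((contDiffOn_const (c := c)).smul (contDiffOn_intervalIntegral hΛ hf a b)).congr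
    hfbar
  have hsC := hs.contDiffOn_of_integral_eq_zero hΛ hω hω₀ hf hfbarC hab hs₀
  have hpC := hs.contDiffOn_lieDeriv hΛ hsC (hf.of_le hle) (hg.of_le hle)
  have hpbarC := ((contDiffOn_const (c := c)).smul (contDiffOn_intervalIntegral hΛ hpC a b)).congr
    hpbar
  exact ⟨hfbarC, hsC, hpbarC, hv.contDiffOn_of_eq_zero hΛ hω hω₀ hsC contDiffOn_const hv₀,
    hw.contDiffOn_of_eq_zero hΛ (hω.of_le hle) hω₀ hpC hpbarC hw₀⟩

end Homological

/-! ### Linear systems -/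

section LinearSystem

variable {ι κ : Type*} [Fintype κ]

theorem continuousOn_mulVec {X : Type*} [TopologicalSpace X] {A : X → Matrix ι κ ℝ}
    {x : X → κ → ℝ} {S : Set X} (hA : ContinuousOn A S) (hx : ContinuousOn x S) :
    ContinuousOn (fun t => A t *ᵥ x t) S :=
  (continuous_fst.matrix_mulVec continuous_snd).comp_continuousOn (hA.prodMk hx)

theorem hasDerivWithinAt_comp_const_mul {F : Type*} [NormedAddCommGroup F] [NormedSpace ℝ F]
    {c t : ℝ} {S S' : Set ℝ} {y : ℝ → F} {y' : F} (hy : HasDerivWithinAt y y' S (c * t))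
    (hS : MapsTo (c * ·) S' S) : HasDerivWithinAt (fun t' => y (c * t')) (c • y') S' t := by
  simpa [comp_def] using hy.scomp t ((hasDerivWithinAt_id t S').const_mul c) hS

theorem hasDerivWithinAt_mulVec {A : ℝ → Matrix ι κ ℝ} {A' : Matrix ι κ ℝ} {x : ℝ → κ → ℝ}
    {x' : κ → ℝ} {S : Set ℝ} {t : ℝ}
    (hA : ∀ i j, HasDerivWithinAt (fun t' => A t' i j) (A' i j) S t)
    (hx : HasDerivWithinAt x x' S t) :
    HasDerivWithinAt (fun t' => A t' *ᵥ x t') (A' *ᵥ x t + A t *ᵥ x') S t := by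
  rw [hasDerivWithinAt_pi] at hx ⊢
  intro i
  simp only [mulVec, dotProduct, Pi.add_apply, ← Finset.sum_add_distrib]
  exact .fun_sum fun j _ => (hA i j).mul (hx j)

variable [Fintype ι]

theorem exists_forall_lipschitzWith_mulVec {X : Type*} [TopologicalSpace X]
    {A : X → Matrix ι κ ℝ} {S : Set X} (hS : IsCompact S) (hA : ContinuousOn A S) :
    ∃ C : ℝ≥0, ∀ t ∈ S, LipschitzWith C (A t *ᵥ ·) := by
  classical
  let T : Matrix ι κ ℝ →ₗ[ℝ] ((κ → ℝ) →L[ℝ] (ι → ℝ)) :=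
    LinearMap.toContinuousLinearMap.toLinearMap ∘ₗ Matrix.toLin'.toLinearMap
  obtain ⟨C, hC⟩ :=
    hS.exists_bound_of_continuousOn (T.continuous_of_finiteDimensional.comp_continuousOn hA)
  exact ⟨C.toNNReal, fun t ht => (T (A t)).lipschitz.weaken
    (by simpa [← norm_toNNReal] using Real.toNNReal_mono (hC t ht))⟩

variable [DecidableEq ι]

theorem continuousOn_matrix_inv {X : Type*} [TopologicalSpace X] {A : X → Matrix ι ι ℝ}
    {S : Set X} (hA : ContinuousOn A S) (hdet : ∀ x ∈ S, IsUnit (A x).det) :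
    ContinuousOn (fun x => (A x)⁻¹) S := fun x hx =>
  (continuousAt_matrix_inv _ (NormedRing.inverse_continuousAt (hdet x hx).unit))
    |>.comp_continuousWithinAt (hA x hx)

variable {A R : ℝ → Matrix ι ι ℝ} {a b : ℝ}

theorem det_ne_zero_of_hasDerivWithinAt_mul (hab : a ≤ b) (hA : ContinuousOn A (Icc a b))
    (hR : ∀ t ∈ Icc a b, ∀ i j,
      HasDerivWithinAt (fun t' => R t' i j) ((A t * R t) i j) (Icc a b) t)
    (hRa : (R a).det ≠ 0) : (R b).det ≠ 0 := by
  intro hRb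
  obtain ⟨c, hc, hRc⟩ := exists_mulVec_eq_zero_iff.2 hRb
  obtain ⟨C, hC⟩ := exists_forall_lipschitzWith_mulVec isCompact_Icc hA
  have hderiv : ∀ t ∈ Icc a b,
      HasDerivWithinAt (fun t' => R t' *ᵥ c) (A t *ᵥ (R t *ᵥ c)) (Icc a b) t := fun t ht => by
    simpa using hasDerivWithinAt_mulVec (hR t ht) (hasDerivWithinAt_const t _ c)
  -- A solution vanishing at `b` vanishes identically, by uniqueness backwards in time.
  have hzero : EqOn (fun t => R t *ᵥ c) 0 (Icc a b) :=
    ODE_solution_unique_of_mem_Icc_left (v := fun t x => A t *ᵥ x) (s := fun _ => univ)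
      (fun t ht => (hC t (Ioc_subset_Icc_self ht)).lipschitzOnWith)
      (fun t ht => (hderiv t ht).continuousWithinAt)
      (fun t ht => (hderiv t (Ioc_subset_Icc_self ht)).mono_of_mem_nhdsWithin
        (Icc_mem_nhdsLE_of_mem ht))
      (fun _ _ => mem_univ _) continuousOn_const
      (fun t _ => (hasDerivWithinAt_const t _ 0).congr_deriv (mulVec_zero _).symm)
      (fun _ _ => mem_univ _) (by simpa using hRc)
  exact hRa (exists_mulVec_eq_zero_iff.1 ⟨c, hc, hzero (left_mem_Icc.2 hab)⟩)

theorem hasDerivWithinAt_integral_of_continuousOn_Icc {F : Type*} [NormedAddCommGroup F]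
    [NormedSpace ℝ F] [CompleteSpace F] {y : ℝ → F} (hy : ContinuousOn y (Icc a b)) {t : ℝ}
    (ht : t ∈ Icc a b) : HasDerivWithinAt (fun t' => ∫ r in a..t', y r) (y t) (Icc a b) t := by
  have : Fact (t ∈ Icc a b) := ⟨ht⟩
  refine intervalIntegral.integral_hasDerivWithinAt_right ?_
    (hy.stronglyMeasurableAtFilter_nhdsWithin measurableSet_Icc t) (hy t ht)
  exact (hy.mono (by rw [uIcc_of_le ht.1]; exact Icc_subset_Icc_right ht.2)).intervalIntegrable

theorem variation_of_constants {x y : ℝ → ι → ℝ} (hab : a ≤ b) (hA : ContinuousOn A (Icc a b))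
    (hR : ∀ t ∈ Icc a b, ∀ i j,
      HasDerivWithinAt (fun t' => R t' i j) ((A t * R t) i j) (Icc a b) t)
    (hRa : (R a).det ≠ 0) (hy : ContinuousOn y (Icc a b))
    (hx : ∀ t ∈ Icc a b, HasDerivWithinAt x (A t *ᵥ x t + y t) (Icc a b) t) :
    x b = R b *ᵥ ((R a)⁻¹ *ᵥ x a + ∫ t in a..b, (R t)⁻¹ *ᵥ y t) := by
  have hdet : ∀ t ∈ Icc a b, IsUnit (R t).det := fun t ht =>
    (det_ne_zero_of_hasDerivWithinAt_mul ht.1 (hA.mono (Icc_subset_Icc_right ht.2))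
      (fun t' ht' i j => (hR t' ⟨ht'.1, ht'.2.trans ht.2⟩ i j).mono
        (Icc_subset_Icc_right ht.2)) hRa).isUnit
  have hRinv : ContinuousOn (fun t => (R t)⁻¹) (Icc a b) :=
    continuousOn_matrix_inv (continuousOn_pi.2 fun i => continuousOn_pi.2 fun j t ht =>
      (hR t ht i j).continuousWithinAt) hdet
  let z : ℝ → ι → ℝ := fun t => R t *ᵥ ((R a)⁻¹ *ᵥ x a + ∫ r in a..t, (R r)⁻¹ *ᵥ y r)
  have hz : ∀ t ∈ Icc a b, HasDerivWithinAt z (A t *ᵥ z t + y t) (Icc a b) t := fun t ht => by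
    have hint := hasDerivWithinAt_integral_of_continuousOn_Icc (continuousOn_mulVec hRinv hy) ht
    refine (hasDerivWithinAt_mulVec (hR t ht) (hint.const_add _)).congr_deriv ?_
    rw [mulVec_mulVec, mul_nonsing_inv _ (hdet t ht), one_mulVec, ← mulVec_mulVec]
  have hza : z a = x a := by
    simp [z, mulVec_mulVec, mul_nonsing_inv _ (hdet a (left_mem_Icc.2 hab))]
  obtain ⟨C, hC⟩ := exists_forall_lipschitzWith_mulVec isCompact_Icc hA
  refine ODE_solution_unique_of_mem_Icc_right (v := fun t x => A t *ᵥ x + y t)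
    (s := fun _ => univ) (K := C) (fun t ht => ?_)
    (fun t ht => (hx t ht).continuousWithinAt)
    (fun t ht => (hx t (Ico_subset_Icc_self ht)).mono_of_mem_nhdsWithin
      (Icc_mem_nhdsGE_of_mem ht)) (fun _ _ => mem_univ _)
    (fun t ht => (hz t ht).continuousWithinAt)
    (fun t ht => (hz t (Ico_subset_Icc_self ht)).mono_of_mem_nhdsWithin
      (Icc_mem_nhdsGE_of_mem ht)) (fun _ _ => mem_univ _) hza.symm (right_mem_Icc.2 hab)
  simpa using (hC t (Ico_subset_Icc_self ht)).add (LipschitzWith.const (y t))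

end LinearSystem

/-! ### Jacobians of the averaged vector field -/

section Jacobian

variable {ι κ : Type*} [Fintype κ] {Λ : Set (κ → ℝ)}

theorem continuousOn_gradient_apply (hΛ : IsOpen Λ) {φ : (κ → ℝ) → ℝ}
    {D : (κ → ℝ) → κ → ℝ} (hφ : ContDiffOn ℝ 1 φ Λ)
    (hD : ∀ I ∈ Λ, HasFDerivAt φ (∑ j, D I j • (.proj j : (κ → ℝ) →L[ℝ] ℝ)) I) (j : κ) :
    ContinuousOn (fun I => D I j) Λ := by
  classical
  refine ((hφ.continuousOn_fderiv_of_isOpen hΛ le_rfl).clm_apply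
    (continuousOn_const (c := Pi.single j 1))).congr fun I hI => ?_
  simp [(hD I hI).fderiv, Pi.single_apply]

theorem contDiffOn_jacobian_apply [Fintype ι] (hΛ : IsOpen Λ) {n : ℕ} {φ : (κ → ℝ) → ι → ℝ}
    {F' : (κ → ℝ) → Matrix ι κ ℝ} (hφ : ContDiffOn ℝ (n + 1 : ℕ) φ Λ)
    (hF' : ∀ I ∈ Λ, HasFDerivAt φ (mulVecLin (F' I)).toContinuousLinearMap I) (i : ι) (k : κ) :
    ContDiffOn ℝ n (fun I => F' I i k) Λ := by
  classical
  refine (contDiffOn_pi.1 ((hφ.fderiv_of_isOpen hΛ (by norm_cast)).clm_apply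
    (contDiffOn_const (c := Pi.single k 1))) i).congr fun I hI => ?_
  simp [(hF' I hI).fderiv]

variable {φ : (κ → ℝ) → κ → ℝ} {F' M : (κ → ℝ) → Matrix κ κ ℝ}
  {F'' : (κ → ℝ) → κ → κ → κ → ℝ}

theorem continuousOn_secondOrderMatrix (hΛ : IsOpen Λ) (hφ : ContDiffOn ℝ (2 : ℕ) φ Λ)
    (hF' : ∀ I ∈ Λ, HasFDerivAt φ (mulVecLin (F' I)).toContinuousLinearMap I)
    (hF'' : ∀ I ∈ Λ, ∀ i k, HasFDerivAt (fun I' => F' I' i k)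
      (∑ j, F'' I i j k • (.proj j : (κ → ℝ) →L[ℝ] ℝ)) I)
    (hM : ∀ I ∈ Λ, ∀ i k, M I i k = (∑ j, F'' I i j k * φ I j) - (F' I * F' I) i k) :
    ContinuousOn M Λ := by
  have hF'C := contDiffOn_jacobian_apply hΛ hφ hF'
  have hF''C := fun i j k => continuousOn_gradient_apply hΛ (hF'C i k)
    (fun I hI => hF'' I hI i k) j
  refine continuousOn_pi.2 fun i => continuousOn_pi.2 fun k => ?_
  refine .congr (.sub ?_ ?_) fun I hI => hM I hI i k
  · exact continuousOn_finsetSum _ fun j _ =>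
      (hF''C i j k).mul (continuousOn_pi.1 hφ.continuousOn j)
  · exact continuousOn_finsetSum _ fun j _ => (hF'C i j).continuousOn.mul (hF'C j k).continuousOn

theorem hasDerivWithinAt_jacobian_comp {x : ℝ → κ → ℝ} {ε t : ℝ} {S : Set ℝ}
    (hF'' : ∀ i k, HasFDerivAt (fun I => F' I i k)
      (∑ j, F'' (x t) i j k • (.proj j : (κ → ℝ) →L[ℝ] ℝ)) (x t))
    (hM : ∀ i k, M (x t) i k =
      (∑ j, F'' (x t) i j k * φ (x t) j) - (F' (x t) * F' (x t)) i k)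
    (hx : HasDerivWithinAt x (ε • φ (x t)) S t) (i k : κ) :
    HasDerivWithinAt (fun t' => F' (x t') i k)
      ((ε • (M (x t) + F' (x t) * F' (x t))) i k) S t := by
  refine ((hF'' i k).comp_hasDerivWithinAt t hx).congr_deriv ?_
  simp [hM i k, Finset.mul_sum]

end Jacobian

/-! ### Solutions of the perturbed and of the averaged system -/

section PerturbedSolution

variable {E F : Type*} [NormedAddCommGroup E] [NormedSpace ℝ E] [NormedAddCommGroup F]

/-- `(I, θ)` solves the perturbed system `dI/dt = ε f(I, θ)`, `dθ/dt = ω(I) + ε g(I, θ)` on the set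
of times `S`, with `I` remaining in `Λ`. The angle is a real number, not a point of the circle. -/
def IsPerturbedSolution (Λ : Set E) (ω : E → ℝ) (f : E → ℝ → E) (g : E → ℝ → ℝ) (ε : ℝ)
    (I : ℝ → E) (θ : ℝ → ℝ) (S : Set ℝ) : Prop :=
  ∀ t ∈ S, I t ∈ Λ ∧ HasDerivWithinAt I (ε • f (I t) (θ t)) S t ∧
    HasDerivWithinAt θ (ω (I t) + ε * g (I t) (θ t)) S t

namespace IsPerturbedSolution

variable {Λ : Set E} {ω : E → ℝ} {f : E → ℝ → E} {g : E → ℝ → ℝ} {φ ψ δψ : E → ℝ → F}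
  {φbar : E → F} {ε : ℝ} {I : ℝ → E} {θ : ℝ → ℝ} {S : Set ℝ}

theorem mapsTo (h : IsPerturbedSolution Λ ω f g ε I θ S) : MapsTo I S Λ := fun t ht => (h t ht).1

theorem continuousOn (h : IsPerturbedSolution Λ ω f g ε I θ S) : ContinuousOn I S := fun t ht =>
  (h t ht).2.1.continuousWithinAt

theorem continuousOn_comp (h : IsPerturbedSolution Λ ω f g ε I θ S)
    (hψ : ContinuousOn (uncurry ψ) (Λ ×ˢ univ)) : ContinuousOn (fun t => ψ (I t) (θ t)) S :=
  hψ.comp (h.continuousOn.prodMk fun t ht => (h t ht).2.2.continuousWithinAt) fun _ ht =>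
    ⟨h.mapsTo ht, mem_univ _⟩

theorem hasDerivWithinAt_comp [NormedSpace ℝ F] (h : IsPerturbedSolution Λ ω f g ε I θ S)
    (hΛ : IsOpen Λ) (hψ : IsHomologicalSolution Λ ω f g φ φbar ψ δψ)
    (hψd : DifferentiableOn ℝ (uncurry ψ) (Λ ×ˢ univ)) {t : ℝ} (ht : t ∈ S) :
    HasDerivWithinAt (fun t' => ψ (I t') (θ t'))
      (φ (I t) (θ t) - φbar (I t) + ε • δψ (I t) (θ t)) S t := by
  obtain ⟨hIt, hI, hθ⟩ := h t ht
  obtain ⟨A, B, hA, hB, hφ, hδ⟩ := hψ (I t) hIt (θ t)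
  have hdiff := hψd.differentiableAt ((hΛ.prod isOpen_univ).mem_nhds
    (show (I t, θ t) ∈ Λ ×ˢ univ from ⟨hIt, mem_univ _⟩))
  refine ((hasFDerivAt_uncurry_of_partial hdiff hA hB).comp_hasDerivWithinAt t
    (hI.prodMk hθ)).congr_deriv ?_
  rw [hφ, hδ, ContinuousLinearMap.coprod_apply, map_smul,
    ContinuousLinearMap.toSpanSingleton_apply]
  module

end IsPerturbedSolution

end PerturbedSolution

section AveragedSolution

variable {ι : Type*} [Fintype ι]

/-- `J` solves the averaged system `dJ/dτ = fbar(J)` on the set of times `S` and remains in `Λ`,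
while `R` and `K` solve the linear systems `dR/dτ = F'(J) R` and `dK/dτ = F'(J) K + pbar(J)` along
`J`, where `F'` stands for the Jacobian of `fbar`. The equation for `R` is imposed entrywise, so
that no norm on matrices has to be chosen. -/
def IsAveragedSolution (Λ : Set (ι → ℝ)) (fbar pbar : (ι → ℝ) → ι → ℝ)
    (F' : (ι → ℝ) → Matrix ι ι ℝ) (J : ℝ → ι → ℝ) (R : ℝ → Matrix ι ι ℝ) (K : ℝ → ι → ℝ)
    (S : Set ℝ) : Prop :=
  ∀ τ ∈ S, J τ ∈ Λ ∧ HasDerivWithinAt J (fbar (J τ)) S τ ∧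
    (∀ i k, HasDerivWithinAt (fun τ' => R τ' i k) ((F' (J τ) * R τ) i k) S τ) ∧
    HasDerivWithinAt K (F' (J τ) *ᵥ K τ + pbar (J τ)) S τ

namespace IsAveragedSolution

variable {Λ : Set (ι → ℝ)} {fbar pbar : (ι → ℝ) → ι → ℝ} {F' : (ι → ℝ) → Matrix ι ι ℝ}
  {J : ℝ → ι → ℝ} {R : ℝ → Matrix ι ι ℝ} {K : ℝ → ι → ℝ} {S S' : Set ℝ} {ε : ℝ}

theorem hasDerivWithinAt_fastTime (h : IsAveragedSolution Λ fbar pbar F' J R K S)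
    (hS : MapsTo (ε * ·) S' S) {t : ℝ} (ht : t ∈ S') :
    HasDerivWithinAt (fun t' => J (ε * t')) (ε • fbar (J (ε * t))) S' t ∧
      (∀ i k, HasDerivWithinAt (fun t' => R (ε * t') i k)
        ((ε • F' (J (ε * t)) * R (ε * t)) i k) S' t) ∧
      HasDerivWithinAt (fun t' => K (ε * t'))
        (ε • (F' (J (ε * t)) *ᵥ K (ε * t) + pbar (J (ε * t)))) S' t := by
  obtain ⟨-, hJ, hR, hK⟩ := h (ε * t) (hS ht)
  exact ⟨hasDerivWithinAt_comp_const_mul hJ hS,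
    fun i k => by simpa using hasDerivWithinAt_comp_const_mul (hR i k) hS,
    hasDerivWithinAt_comp_const_mul hK hS⟩

end IsAveragedSolution

end AveragedSolution

/-! ### The error of averaging -/

section AveragingError

theorem hasDerivWithinAt_inv_smul_sub {F : Type*} [NormedAddCommGroup F] [NormedSpace ℝ F]
    {S : Set ℝ} {ε t : ℝ} {x y : ℝ → F} {x' y' : F} (hε : ε ≠ 0)
    (hx : HasDerivWithinAt x (ε • x') S t) (hy : HasDerivWithinAt y (ε • y') S t) :
    HasDerivWithinAt (fun t' => ε⁻¹ • (x t' - y t')) (x' - y') S t :=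
  ((hx.sub hy).const_smul ε⁻¹).congr_deriv (by rw [← smul_sub, inv_smul_smul₀ hε])

variable {ι : Type*} [Fintype ι]

theorem hasDerivWithinAt_averaging_remainder {S : Set ℝ} {ε t : ℝ} {A R : ℝ → Matrix ι ι ℝ}
    {M : Matrix ι ι ℝ} {L s v w K : ℝ → ι → ℝ} {f fI fJ p pI pJ q u G H : ι → ℝ} (c : ι → ℝ)
    (hL : HasDerivWithinAt L (f - fJ) S t)
    (hs : HasDerivWithinAt s (f - fI + ε • p) S t)
    (hv : HasDerivWithinAt v (s t + ε • q) S t)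
    (hw : HasDerivWithinAt w (p - pI + ε • u) S t)
    (hA : ∀ i k, HasDerivWithinAt (fun t' => A t' i k) ((ε • (M + A t * A t)) i k) S t)
    (hR : ∀ i k, HasDerivWithinAt (fun t' => R t' i k) ((ε • A t * R t) i k) S t)
    (hK : HasDerivWithinAt K (ε • (A t *ᵥ K t + pJ)) S t)
    (hf : fI = fJ + ε • (A t *ᵥ L t) + ε ^ 2 • H) (hp : pI = pJ + ε • G) :
    HasDerivWithinAt (fun t' => L t' - s t' + R t' *ᵥ c + K t' + ε • (w t' - A t' *ᵥ v t'))
      ((ε • A t) *ᵥ (L t - s t + R t *ᵥ c + K t + ε • (w t - A t *ᵥ v t)) +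
        ε ^ 2 • (u - A t *ᵥ (w t + q) - M *ᵥ v t - G + H)) S t := by
  refine ((((hL.sub hs).add (hasDerivWithinAt_mulVec hR (hasDerivWithinAt_const t S c))).add
    hK).add ((hw.sub (hasDerivWithinAt_mulVec hA hv)).const_smul ε)).congr_deriv ?_
  simp only [hf, hp, mulVec_add, mulVec_sub, mulVec_smul, smul_mulVec, add_mulVec, smul_mul,
    ← mulVec_mulVec, mulVec_zero]
  module

theorem sum_mul_smul_mul_smul (H : ι → ι → ι → ℝ) (ε : ℝ) (x : ι → ℝ) :
    (fun i => ∑ j, ∑ k, H i j k * (ε • x) j * (ε • x) k) =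
      ε ^ 2 • fun i => ∑ j, ∑ k, H i j k * x j * x k := by
  ext i
  simp only [Pi.smul_apply, smul_eq_mul, Finset.mul_sum]
  exact Finset.sum_congr rfl fun j _ => Finset.sum_congr rfl fun k _ => by ring

variable [DecidableEq ι]

theorem averaging_integral_equation_of_hasDerivWithinAt {T ε : ℝ} (hT : 0 ≤ T) (hε : ε ≠ 0)
    {A M R : ℝ → Matrix ι ι ℝ} {L s v w K f fI fJ p pI pJ q u G H : ℝ → ι → ℝ}
    (hL : ∀ t ∈ Icc 0 T, HasDerivWithinAt L (f t - fJ t) (Icc 0 T) t)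
    (hs : ∀ t ∈ Icc 0 T, HasDerivWithinAt s (f t - fI t + ε • p t) (Icc 0 T) t)
    (hv : ∀ t ∈ Icc 0 T, HasDerivWithinAt v (s t + ε • q t) (Icc 0 T) t)
    (hw : ∀ t ∈ Icc 0 T, HasDerivWithinAt w (p t - pI t + ε • u t) (Icc 0 T) t)
    (hA : ∀ t ∈ Icc 0 T, ∀ i k,
      HasDerivWithinAt (fun t' => A t' i k) ((ε • (M t + A t * A t)) i k) (Icc 0 T) t)
    (hR : ∀ t ∈ Icc 0 T, ∀ i k,
      HasDerivWithinAt (fun t' => R t' i k) ((ε • A t * R t) i k) (Icc 0 T) t)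
    (hK : ∀ t ∈ Icc 0 T, HasDerivWithinAt K (ε • (A t *ᵥ K t + pJ t)) (Icc 0 T) t)
    (hf : ∀ t ∈ Icc 0 T, fI t = fJ t + ε • (A t *ᵥ L t) + ε ^ 2 • H t)
    (hp : ∀ t ∈ Icc 0 T, pI t = pJ t + ε • G t)
    (hfI : ContinuousOn fI (Icc 0 T)) (hfJ : ContinuousOn fJ (Icc 0 T))
    (hpI : ContinuousOn pI (Icc 0 T)) (hpJ : ContinuousOn pJ (Icc 0 T))
    (hM : ContinuousOn M (Icc 0 T)) (hq : ContinuousOn q (Icc 0 T))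
    (hu : ContinuousOn u (Icc 0 T))
    (hL₀ : L 0 = 0) (hv₀ : v 0 = 0) (hw₀ : w 0 = 0) (hR₀ : R 0 = 1) (hK₀ : K 0 = 0) :
    L T = s T - R T *ᵥ s 0 - K T - ε • (w T - A T *ᵥ v T) +
      ε ^ 2 • (R T *ᵥ ∫ t in (0 : ℝ)..T, (R t)⁻¹ *ᵥ
        (u t - A t *ᵥ (w t + q t) - M t *ᵥ v t - G t + H t)) := by
  have hAc : ContinuousOn A (Icc 0 T) := continuousOn_pi.2 fun i => continuousOn_pi.2
    fun k t ht => (hA t ht i k).continuousWithinAt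
  have hLc : ContinuousOn L (Icc 0 T) := fun t ht => (hL t ht).continuousWithinAt
  have hvc : ContinuousOn v (Icc 0 T) := fun t ht => (hv t ht).continuousWithinAt
  have hwc : ContinuousOn w (Icc 0 T) := fun t ht => (hw t ht).continuousWithinAt
  -- `G` and `H` are continuous because they are difference quotients of continuous curves.
  have hG : ContinuousOn G (Icc 0 T) := (continuousOn_const_smul_iff₀ hε).1 <|
    (hpI.sub hpJ).congr fun t ht => by simp [hp t ht]
  have hH : ContinuousOn H (Icc 0 T) := (continuousOn_const_smul_iff₀ (pow_ne_zero 2 hε)).1 <|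
    ((hfI.sub hfJ).sub ((continuousOn_mulVec hAc hLc).const_smul ε)).congr fun t ht => by
      simp [hf t ht, add_assoc]
  have hsource : ContinuousOn
      (fun t => ε ^ 2 • (u t - A t *ᵥ (w t + q t) - M t *ᵥ v t - G t + H t)) (Icc 0 T) :=
    ((((hu.sub (continuousOn_mulVec hAc (hwc.add hq))).sub
      (continuousOn_mulVec hM hvc)).sub hG).add hH).const_smul (ε ^ 2)
  have hDuhamel := variation_of_constants hT (hAc.const_smul ε) hR (by simp [hR₀]) hsource
    fun t ht => hasDerivWithinAt_averaging_remainder (s 0) (hL t ht) (hs t ht) (hv t ht)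
      (hw t ht) (hA t ht) (hR t ht) (hK t ht) (hf t ht) (hp t ht)
  have hinit : L 0 - s 0 + R 0 *ᵥ s 0 + K 0 + ε • (w 0 - A 0 *ᵥ v 0) = 0 := by
    simp [hL₀, hv₀, hw₀, hR₀, hK₀]
  simp only [hinit, mulVec_smul, mulVec_zero, zero_add, intervalIntegral.integral_smul]
    at hDuhamel
  rw [← hDuhamel]
  abel

theorem averaging_error_integral_equation_general {Λ : Set (ι → ℝ)} (hΛ : IsOpen Λ)
    {f : (ι → ℝ) → ℝ → ι → ℝ} {g : (ι → ℝ) → ℝ → ℝ} {ω : (ι → ℝ) → ℝ}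
    (hf : ContinuousOn (uncurry f) (Λ ×ˢ univ)) (hg : ContinuousOn (uncurry g) (Λ ×ˢ univ))
    {fbar pbar : (ι → ℝ) → ι → ℝ} (hfbar : ContDiffOn ℝ (2 : ℕ) fbar Λ)
    (hpbar : ContinuousOn pbar Λ)
    {F' : (ι → ℝ) → Matrix ι ι ℝ}
    (hF' : ∀ I ∈ Λ, HasFDerivAt fbar (mulVecLin (F' I)).toContinuousLinearMap I)
    {F'' : (ι → ℝ) → ι → ι → ι → ℝ}
    (hF'' : ∀ I ∈ Λ, ∀ i k, HasFDerivAt (fun I' => F' I' i k)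
      (∑ j, F'' I i j k • (.proj j : (ι → ℝ) →L[ℝ] ℝ)) I)
    {𝓜 : (ι → ℝ) → Matrix ι ι ℝ}
    (h𝓜 : ∀ I ∈ Λ, ∀ i k, 𝓜 I i k = (∑ j, F'' I i j k * fbar I j) - (F' I * F' I) i k)
    {𝓖 : (ι → ℝ) → (ι → ℝ) → Matrix ι ι ℝ}
    (h𝓖 : ∀ I δI, segment ℝ I (I + δI) ⊆ Λ → pbar (I + δI) = pbar I + 𝓖 I δI *ᵥ δI)
    {𝓗 : (ι → ℝ) → (ι → ℝ) → ι → ι → ι → ℝ}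
    (h𝓗 : ∀ I δI, segment ℝ I (I + δI) ⊆ Λ →
      fbar (I + δI) = fbar I + F' I *ᵥ δI +
        (1 / 2 : ℝ) • (fun i => ∑ j, ∑ k, 𝓗 I δI i j k * δI j * δI k))
    {s p v q w u : (ι → ℝ) → ℝ → ι → ℝ}
    (hs : IsHomologicalSolution Λ ω f g f fbar s p)
    (hsd : DifferentiableOn ℝ (uncurry s) (Λ ×ˢ univ))
    (hv : IsHomologicalSolution Λ ω f g s 0 v q)
    (hvC : ContDiffOn ℝ (1 : ℕ) (uncurry v) (Λ ×ˢ univ))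
    (hw : IsHomologicalSolution Λ ω f g p pbar w u)
    (hwC : ContDiffOn ℝ (1 : ℕ) (uncurry w) (Λ ×ˢ univ))
    {I₀ : ι → ℝ} {θ₀ : ℝ} (hv₀ : v I₀ θ₀ = 0) (hw₀ : w I₀ θ₀ = 0)
    {ε T : ℝ} (hε : 0 < ε) (hT : 0 ≤ T)
    {J : ℝ → ι → ℝ} {R : ℝ → Matrix ι ι ℝ} {K : ℝ → ι → ℝ}
    (hJRK : IsAveragedSolution Λ fbar pbar F' J R K (Icc 0 (ε * T)))
    (hJ₀ : J 0 = I₀) (hR₀ : R 0 = 1) (hK₀ : K 0 = 0)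
    {Ifun : ℝ → ι → ℝ} {Θ : ℝ → ℝ} (hIΘ : IsPerturbedSolution Λ ω f g ε Ifun Θ (Icc 0 T))
    (hI₀ : Ifun 0 = I₀) (hΘ₀ : Θ 0 = θ₀)
    (hseg : ∀ t ∈ Icc 0 T, segment ℝ (J (ε * t)) (Ifun t) ⊆ Λ)
    {L : ℝ → ι → ℝ} (hL : ∀ t, L t = ε⁻¹ • (Ifun t - J (ε * t))) :
    L T = s (Ifun T) (Θ T) - R (ε * T) *ᵥ s I₀ θ₀ - K (ε * T)
      - ε • (w (Ifun T) (Θ T) - F' (J (ε * T)) *ᵥ v (Ifun T) (Θ T))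
      + ε ^ 2 • (R (ε * T) *ᵥ ∫ t' in (0 : ℝ)..T,
          (R (ε * t'))⁻¹ *ᵥ
            (u (Ifun t') (Θ t')
              - F' (J (ε * t')) *ᵥ (w (Ifun t') (Θ t') + q (Ifun t') (Θ t'))
              - 𝓜 (J (ε * t')) *ᵥ v (Ifun t') (Θ t')
              - 𝓖 (J (ε * t')) (ε • L t') *ᵥ L t'
              + (1 / 2 : ℝ) • fun i => ∑ j, ∑ k,
                  𝓗 (J (ε * t')) (ε • L t') i j k * L t' j * L t' k)) := by
  have hmaps : MapsTo (ε * ·) (Icc 0 T) (Icc 0 (ε * T)) := fun t ht =>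
    ⟨mul_nonneg hε.le ht.1, mul_le_mul_of_nonneg_left ht.2 hε.le⟩
  have hJΛ : MapsTo (fun t => J (ε * t)) (Icc 0 T) Λ := fun t ht => (hJRK _ (hmaps ht)).1
  have hfast := fun t ht => hJRK.hasDerivWithinAt_fastTime hmaps (t := t) ht
  have hJc : ContinuousOn (fun t => J (ε * t)) (Icc 0 T) := fun t ht =>
    (hfast t ht).1.continuousWithinAt
  have hIL : ∀ t, Ifun t = J (ε * t) + ε • L t := fun t => by
    rw [hL, smul_inv_smul₀ hε.ne', add_sub_cancel]
  have hLderiv : ∀ t ∈ Icc 0 T,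
      HasDerivWithinAt L (f (Ifun t) (Θ t) - fbar (J (ε * t))) (Icc 0 T) t := fun t ht => by
    rw [funext hL]
    exact hasDerivWithinAt_inv_smul_sub hε.ne' (hIΘ t ht).2.1 (hfast t ht).1
  have hvderiv := fun t ht =>
    hIΘ.hasDerivWithinAt_comp (t := t) hΛ hv (hvC.differentiableOn (by simp)) ht
  simp only [Pi.zero_apply, sub_zero] at hvderiv
  have hf₀ : ContDiffOn ℝ (0 : ℕ) (uncurry f) (Λ ×ˢ univ) := contDiffOn_zero.2 hf
  have hg₀ : ContDiffOn ℝ (0 : ℕ) (uncurry g) (Λ ×ˢ univ) := contDiffOn_zero.2 hg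
  have hequation := averaging_integral_equation_of_hasDerivWithinAt hT hε.ne'
    (A := fun t => F' (J (ε * t))) (M := fun t => 𝓜 (J (ε * t))) (R := fun t => R (ε * t))
    (K := fun t => K (ε * t)) (fJ := fun t => fbar (J (ε * t)))
    (pJ := fun t => pbar (J (ε * t))) (G := fun t => 𝓖 (J (ε * t)) (ε • L t) *ᵥ L t)
    (H := fun t => (1 / 2 : ℝ) • fun i => ∑ j, ∑ k,
      𝓗 (J (ε * t)) (ε • L t) i j k * L t j * L t k)
    hLderiv (fun t ht => hIΘ.hasDerivWithinAt_comp hΛ hs hsd ht) hvderiv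
    (fun t ht => hIΘ.hasDerivWithinAt_comp hΛ hw (hwC.differentiableOn (by simp)) ht)
    (fun t ht => hasDerivWithinAt_jacobian_comp (hF'' _ (hJΛ ht)) (h𝓜 _ (hJΛ ht))
      (hfast t ht).1)
    (fun t ht => (hfast t ht).2.1) (fun t ht => (hfast t ht).2.2)
    (fun t ht => by
      rw [hIL, h𝓗 _ _ (hIL t ▸ hseg t ht), mulVec_smul, sum_mul_smul_mul_smul, smul_comm])
    (fun t ht => by rw [hIL, h𝓖 _ _ (hIL t ▸ hseg t ht), mulVec_smul])
    (hfbar.continuousOn.comp hIΘ.continuousOn hIΘ.mapsTo) (hfbar.continuousOn.comp hJc hJΛ)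
    (hpbar.comp hIΘ.continuousOn hIΘ.mapsTo) (hpbar.comp hJc hJΛ)
    ((continuousOn_secondOrderMatrix hΛ hfbar hF' hF'' h𝓜).comp hJc hJΛ)
    (hIΘ.continuousOn_comp (hv.contDiffOn_lieDeriv hΛ hvC hf₀ hg₀).continuousOn)
    (hIΘ.continuousOn_comp (hw.contDiffOn_lieDeriv hΛ hwC hf₀ hg₀).continuousOn)
    (by simp [hL, hI₀, hJ₀]) (by simp [hI₀, hΘ₀, hv₀]) (by simp [hI₀, hΘ₀, hw₀]) (by simp [hR₀])
    (by simp [hK₀])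
  rwa [hI₀, hΘ₀] at hequation

end AveragingError

/-- **The integral equation for the error of one-frequency averaging**
(Lemma 2B of Morosi–Pizzocchero).  The space of actions is `ℝ^d = Fin d → ℝ`,
the angle is modelled by a real variable with all functions `2π`-periodic in it.
`f, g, ω` are the data of the perturbed one-frequency system, `f̄` the averaged
vector field, `J` the averaged solution on `[0,U)` (`U ∈ (0,∞]` an `EReal`),
`R, K` the solutions of the linear auxiliary systems, `s, p, v, q, w, u, 𝓜, 𝓖, 𝓗`
the auxiliary functions of the scheme (given along with the derivative witnesses
`sθ, sI`, etc.), and `(Ifun, Θ)` the solution of the perturbed system on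
`[0, U/ε)`, with the segment `[J(εt), Ifun(t)]` inside `Λ`.  Then the error
`L(t) = ε⁻¹ (Ifun(t) − J(εt))` satisfies the stated integral equation. -/
theorem averaging_error_integral_equation
    {d : ℕ} (hd : 1 ≤ d)
    (Λ : Set (Fin d → ℝ)) (hΛ : IsOpen Λ)
    (m : ℕ) (hm : 2 ≤ m)
    (f : (Fin d → ℝ) → ℝ → Fin d → ℝ)
    (g : (Fin d → ℝ) → ℝ → ℝ)
    (ω : (Fin d → ℝ) → ℝ)
    (hf : ContDiffOn ℝ m (fun p : (Fin d → ℝ) × ℝ => f p.1 p.2) (Λ ×ˢ Set.univ))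
    (hfper : ∀ I θ, f I (θ + 2 * π) = f I θ)
    (hg : ContDiffOn ℝ m (fun p : (Fin d → ℝ) × ℝ => g p.1 p.2) (Λ ×ˢ Set.univ))
    (hgper : ∀ I θ, g I (θ + 2 * π) = g I θ)
    (hω : ContDiffOn ℝ m ω Λ)
    (hωne : ∀ I ∈ Λ, ω I ≠ 0)
    (I₀ : Fin d → ℝ) (hI₀ : I₀ ∈ Λ) (θ₀ : ℝ)
    (ε : ℝ) (hε : 0 < ε)
    -- the averaged vector field
    (fbar : (Fin d → ℝ) → Fin d → ℝ)
    (hfbar : ∀ I, fbar I = (2 * π)⁻¹ • ∫ θ in (0:ℝ)..2 * π, f I θ)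
    -- the averaged solution on [0,U)
    (U : EReal) (hU : 0 < U)
    (J : ℝ → Fin d → ℝ)
    (hJ0 : J 0 = I₀)
    (hJmem : ∀ τ : ℝ, 0 ≤ τ → (τ : EReal) < U → J τ ∈ Λ)
    (hJode : ∀ τ : ℝ, 0 ≤ τ → (τ : EReal) < U → HasDerivAt J (fbar (J τ)) τ)
    -- the Jacobian ∂f̄/∂I
    (F' : (Fin d → ℝ) → Matrix (Fin d) (Fin d) ℝ)
    (hF' : ∀ I ∈ Λ, HasFDerivAt fbar (Matrix.mulVecLin (F' I)).toContinuousLinearMap I)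
    -- the auxiliary function s :  f = f̄ + ω ∂s/∂θ,  s̄ = 0
    (s sθ : (Fin d → ℝ) → ℝ → Fin d → ℝ)
    (hsθ : ∀ I ∈ Λ, ∀ θ : ℝ, HasDerivAt (fun θ' => s I θ') (sθ I θ) θ)
    (hs : ∀ I ∈ Λ, ∀ θ : ℝ, f I θ = fbar I + ω I • sθ I θ)
    (hsavg : ∀ I ∈ Λ, (∫ θ in (0:ℝ)..2 * π, s I θ) = 0)
    (sI : (Fin d → ℝ) → ℝ → Matrix (Fin d) (Fin d) ℝ)
    (hsI : ∀ I ∈ Λ, ∀ θ : ℝ,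
      HasFDerivAt (fun I' => s I' θ) (Matrix.mulVecLin (sI I θ)).toContinuousLinearMap I)
    -- p := (∂s/∂I) f + (∂s/∂θ) g  and its average p̄
    (p : (Fin d → ℝ) → ℝ → Fin d → ℝ)
    (hp : ∀ I ∈ Λ, ∀ θ : ℝ, p I θ = sI I θ *ᵥ f I θ + g I θ • sθ I θ)
    (pbar : (Fin d → ℝ) → Fin d → ℝ)
    (hpbar : ∀ I ∈ Λ, pbar I = (2 * π)⁻¹ • ∫ θ in (0:ℝ)..2 * π, p I θ)
    -- R and K : solutions of the linear auxiliary systems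
    (R : ℝ → Matrix (Fin d) (Fin d) ℝ)
    (hR0 : R 0 = 1)
    (hRode : ∀ τ : ℝ, 0 ≤ τ → (τ : EReal) < U → ∀ i j,
      HasDerivAt (fun τ' => R τ' i j) ((F' (J τ) * R τ) i j) τ)
    (K : ℝ → Fin d → ℝ)
    (hK0 : K 0 = 0)
    (hKode : ∀ τ : ℝ, 0 ≤ τ → (τ : EReal) < U →
      HasDerivAt K (F' (J τ) *ᵥ K τ + pbar (J τ)) τ)
    -- v :  s = ω ∂v/∂θ,  v(I,θ₀) = 0
    (v vθ : (Fin d → ℝ) → ℝ → Fin d → ℝ)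
    (hvθ : ∀ I ∈ Λ, ∀ θ : ℝ, HasDerivAt (fun θ' => v I θ') (vθ I θ) θ)
    (hv : ∀ I ∈ Λ, ∀ θ : ℝ, s I θ = ω I • vθ I θ)
    (hv0 : ∀ I ∈ Λ, v I θ₀ = 0)
    (vI : (Fin d → ℝ) → ℝ → Matrix (Fin d) (Fin d) ℝ)
    (hvI : ∀ I ∈ Λ, ∀ θ : ℝ,
      HasFDerivAt (fun I' => v I' θ) (Matrix.mulVecLin (vI I θ)).toContinuousLinearMap I)
    -- q := (∂v/∂I) f + (∂v/∂θ) g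
    (q : (Fin d → ℝ) → ℝ → Fin d → ℝ)
    (hq : ∀ I ∈ Λ, ∀ θ : ℝ, q I θ = vI I θ *ᵥ f I θ + g I θ • vθ I θ)
    -- w :  p = p̄ + ω ∂w/∂θ,  w(I,θ₀) = 0
    (w wθ : (Fin d → ℝ) → ℝ → Fin d → ℝ)
    (hwθ : ∀ I ∈ Λ, ∀ θ : ℝ, HasDerivAt (fun θ' => w I θ') (wθ I θ) θ)
    (hw : ∀ I ∈ Λ, ∀ θ : ℝ, p I θ = pbar I + ω I • wθ I θ)
    (hw0 : ∀ I ∈ Λ, w I θ₀ = 0)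
    (wI : (Fin d → ℝ) → ℝ → Matrix (Fin d) (Fin d) ℝ)
    (hwI : ∀ I ∈ Λ, ∀ θ : ℝ,
      HasFDerivAt (fun I' => w I' θ) (Matrix.mulVecLin (wI I θ)).toContinuousLinearMap I)
    -- u := (∂w/∂I) f + (∂w/∂θ) g
    (u : (Fin d → ℝ) → ℝ → Fin d → ℝ)
    (hu : ∀ I ∈ Λ, ∀ θ : ℝ, u I θ = wI I θ *ᵥ f I θ + g I θ • wθ I θ)
    -- the second derivative ∂²f̄/∂I² and 𝓜 := (∂²f̄/∂I²) f̄ − (∂f̄/∂I)²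
    (F'' : (Fin d → ℝ) → Fin d → Fin d → Fin d → ℝ)
    (hF'' : ∀ I ∈ Λ, ∀ i k, HasFDerivAt (fun I' => F' I' i k)
      (∑ j, F'' I i j k • (ContinuousLinearMap.proj j : (Fin d → ℝ) →L[ℝ] ℝ)) I)
    (𝓜 : (Fin d → ℝ) → Matrix (Fin d) (Fin d) ℝ)
    (h𝓜 : ∀ I ∈ Λ, ∀ i k, 𝓜 I i k = (∑ j, F'' I i j k * fbar I j) - (F' I * F' I) i k)
    -- 𝓖 and 𝓗 on Λ†
    (𝓖 : (Fin d → ℝ) → (Fin d → ℝ) → Matrix (Fin d) (Fin d) ℝ)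
    (h𝓖 : ∀ I δI : Fin d → ℝ, segment ℝ I (I + δI) ⊆ Λ →
      pbar (I + δI) = pbar I + 𝓖 I δI *ᵥ δI)
    (𝓗 : (Fin d → ℝ) → (Fin d → ℝ) → Fin d → Fin d → Fin d → ℝ)
    (h𝓗 : ∀ I δI : Fin d → ℝ, segment ℝ I (I + δI) ⊆ Λ →
      fbar (I + δI) = fbar I + F' I *ᵥ δI +
        (1/2 : ℝ) • (fun i => ∑ j, ∑ k, 𝓗 I δI i j k * δI j * δI k))
    (h𝓗symm : ∀ I δI : Fin d → ℝ, segment ℝ I (I + δI) ⊆ Λ →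
      ∀ i j k, 𝓗 I δI i j k = 𝓗 I δI i k j)
    -- the perturbed solution on [0, U/ε)
    (Ifun : ℝ → Fin d → ℝ) (Θ : ℝ → ℝ)
    (hIinit : Ifun 0 = I₀) (hΘinit : Θ 0 = θ₀)
    (hImem : ∀ t : ℝ, 0 ≤ t → ((ε * t : ℝ) : EReal) < U → Ifun t ∈ Λ)
    (hseg : ∀ t : ℝ, 0 ≤ t → ((ε * t : ℝ) : EReal) < U →
      segment ℝ (J (ε * t)) (Ifun t) ⊆ Λ)
    (hIode : ∀ t : ℝ, 0 ≤ t → ((ε * t : ℝ) : EReal) < U →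
      HasDerivAt Ifun (ε • f (Ifun t) (Θ t)) t)
    (hΘode : ∀ t : ℝ, 0 ≤ t → ((ε * t : ℝ) : EReal) < U →
      HasDerivAt Θ (ω (Ifun t) + ε * g (Ifun t) (Θ t)) t)
    -- the error function
    (L : ℝ → Fin d → ℝ)
    (hL : ∀ t, L t = ε⁻¹ • (Ifun t - J (ε * t))) :
    ∀ t : ℝ, 0 ≤ t → ((ε * t : ℝ) : EReal) < U →
      L t = s (Ifun t) (Θ t) - R (ε * t) *ᵥ s I₀ θ₀ - K (ε * t)
        - ε • (w (Ifun t) (Θ t) - F' (J (ε * t)) *ᵥ v (Ifun t) (Θ t))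
        + ε ^ 2 • (R (ε * t) *ᵥ ∫ t' in (0:ℝ)..t,
            (R (ε * t'))⁻¹ *ᵥ
              (u (Ifun t') (Θ t')
                - F' (J (ε * t')) *ᵥ (w (Ifun t') (Θ t') + q (Ifun t') (Θ t'))
                - 𝓜 (J (ε * t')) *ᵥ v (Ifun t') (Θ t')
                - 𝓖 (J (ε * t')) (ε • L t') *ᵥ L t'
                + (1/2 : ℝ) • fun i => ∑ j, ∑ k,
                    𝓗 (J (ε * t')) (ε • L t') i j k * L t' j * L t' k)) := by
  intro T hT hTU
  have hlt : ∀ τ ∈ Icc 0 (ε * T), (τ : EReal) < U := fun τ hτ =>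
    (EReal.coe_le_coe_iff.2 hτ.2).trans_lt hTU
  have hεt : ∀ t ∈ Icc 0 T, ((ε * t : ℝ) : EReal) < U := fun t ht =>
    hlt _ ⟨mul_nonneg hε.le ht.1, mul_le_mul_of_nonneg_left ht.2 hε.le⟩
  have hs' : IsHomologicalSolution Λ ω f g f fbar s p := fun I hI θ =>
    ⟨_, _, hsI I hI θ, hsθ I hI θ, hs I hI θ, hp I hI θ⟩
  have hv' : IsHomologicalSolution Λ ω f g s 0 v q := fun I hI θ =>
    ⟨_, _, hvI I hI θ, hvθ I hI θ, (hv I hI θ).trans (zero_add _).symm, hq I hI θ⟩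
  have hw' : IsHomologicalSolution Λ ω f g p pbar w u := fun I hI θ =>
    ⟨_, _, hwI I hI θ, hwθ I hI θ, hw I hI θ, hu I hI θ⟩
  have hm' : ((1 + 1 : ℕ) : WithTop ℕ∞) ≤ m := by exact_mod_cast hm
  obtain ⟨hfbarC, hsC, hpbarC, hvC, hwC⟩ := contDiffOn_averaging_functions hΛ
    Real.two_pi_pos.ne (hf.of_le hm') (hg.of_le hm') (hω.of_le hm') hωne (fun I _ => hfbar I)
    hs' hsavg hpbar hv' hv0 hw' hw0
  exact averaging_error_integral_equation_general hΛ hf.continuousOn hg.continuousOn hfbarC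
    hpbarC.continuousOn hF' hF'' h𝓜 h𝓖 h𝓗 hs' (hsC.differentiableOn (by simp)) hv'
    (hvC.of_le (by norm_num)) hw' hwC (hv0 I₀ hI₀) (hw0 I₀ hI₀) hε hT
    (fun τ hτ => ⟨hJmem τ hτ.1 (hlt τ hτ), (hJode τ hτ.1 (hlt τ hτ)).hasDerivWithinAt,
      fun i k => (hRode τ hτ.1 (hlt τ hτ) i k).hasDerivWithinAt,
      (hKode τ hτ.1 (hlt τ hτ)).hasDerivWithinAt⟩)
    hJ0 hR0 hK0
    (fun t ht => ⟨hImem t ht.1 (hεt t ht), (hIode t ht.1 (hεt t ht)).hasDerivWithinAt,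
      (hΘode t ht.1 (hεt t ht)).hasDerivWithinAt⟩)
    hIinit hΘinit (fun t ht => hseg t ht.1 (hεt t ht)) hL
end

section
/- Assume the solution J of the averaged system exists on [0,U), and that the solution (I,Θ) of the perturbed system exists on [0,U/ε) with |L(t)|^μ < ρ^μ(εt)/ε for all μ ∈ M and t ∈ [0,U/ε), where L(t) := (1/ε)[I(t) − J(εt)]. Then for all μ ∈ M and t ∈ [0,U/ε): |L(t)|^μ ≤ α^μ(εt, ε|L(t)|) + ε² Σ_λ R^μ_λ(εt) ∫₀^t Σ_κ P^λ_κ(εt') γ^κ(εt', ε|L(t')|, |L(t')|) dt', where |L(t)| := (|L(t)|^ν)_{ν∈M}. -/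
open scoped Real
open MeasureTheory Matrix

/-!
As `ω ∂s/∂θ` is the oscillating part of `f`, subtracting `s(I, Θ)` from the averaging error `L`
removes the oscillating terms of order one from its derivative, and `v`, `w` do the same for the
oscillating terms of order `ε` created by this subtraction. After adding `R s(I₀, θ₀) + K`,
which restores the zero initial value and absorbs the mean `p̄`, the corrected error solves the
linearized averaged equation with a forcing `ε² b`, where `b` is controlled by `γ`. Variation of
constants with the resolvent `R` bounds the seminorms of the corrected error by the integral term,
and undoing the corrections costs `α`.

Variation of constants is carried out on seminorms: `R⁻¹ Y` has derivative `ε² R⁻¹ b`, and a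
seminorm of a curve grows no faster than the seminorm of its derivative.
-/

section Development

open Set Filter Topology Function

section Seminorm

theorem continuous_seminorm_of_finiteDimensional {E : Type*} [NormedAddCommGroup E]
    [NormedSpace ℝ E] [FiniteDimensional ℝ E] (p : Seminorm ℝ E) : Continuous p :=
  continuousOn_univ.1 (p.convexOn.continuousOn isOpen_univ)

theorem seminorm_smul_of_pos {E : Type*} [AddCommGroup E] [Module ℝ E] (p : Seminorm ℝ E)
    {r : ℝ} (hr : 0 < r) (x : E) : p (r • x) = r * p x := by
  rw [map_smul_eq_mul, Real.norm_of_nonneg hr.le]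

theorem slope_seminorm_comp_le {E : Type*} [AddCommGroup E] [Module ℝ E] (p : Seminorm ℝ E)
    (Z : ℝ → E) {x z : ℝ} (hxz : x < z) : slope (fun t => p (Z t)) x z ≤ p (slope Z x z) := by
  have hpos : 0 ≤ (z - x)⁻¹ := (inv_pos.2 (sub_pos.2 hxz)).le
  rw [slope_def_module, slope_def_module, map_smul_eq_mul, Real.norm_of_nonneg hpos, smul_eq_mul]
  refine mul_le_mul_of_nonneg_left (sub_le_iff_le_add.2 ?_) hpos
  simpa using map_add_le_add p (Z z - Z x) (Z x)

theorem seminorm_le_integral_of_hasDerivAt {E : Type*} [NormedAddCommGroup E] [NormedSpace ℝ E]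
    [FiniteDimensional ℝ E] (p : Seminorm ℝ E) {Z Z' : ℝ → E} {β : ℝ → ℝ} {T : ℝ}
    (hT : 0 ≤ T) (hZ0 : Z 0 = 0) (hZ : ∀ t ∈ Icc 0 T, HasDerivAt Z (Z' t) t)
    (hβ : ContinuousOn β (Icc 0 T)) (hle : ∀ t ∈ Icc 0 T, p (Z' t) ≤ β t) :
    p (Z T) ≤ ∫ t in (0 : ℝ)..T, β t := by
  have hp := continuous_seminorm_of_finiteDimensional p
  have hint : IntervalIntegrable β volume 0 T :=
    ContinuousOn.intervalIntegrable (by rwa [uIcc_of_le hT])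
  refine image_le_of_liminf_slope_right_le_deriv_boundary (f := fun t => p (Z t))
    (B := fun x => ∫ t in (0 : ℝ)..x, β t) (B' := β)
    (hp.comp_continuousOn fun t ht => (hZ t ht).continuousAt.continuousWithinAt)
    (by simp [hZ0]) ?_ (fun x hx => ?_) (fun x hx r hr => ?_) (right_mem_Icc.2 hT)
  · simpa only [uIcc_of_le hT] using
      intervalIntegral.continuousOn_primitive_interval' hint left_mem_uIcc
  · have hmem : Icc 0 T ∈ 𝓝[>] x := Icc_mem_nhdsGT_of_mem hx
    refine intervalIntegral.integral_hasDerivWithinAt_right (hint.mono_set ?_) (t := Ioi x)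
      ⟨Icc 0 T, hmem, hβ.aestronglyMeasurable measurableSet_Icc⟩
      ((hβ x (Ico_subset_Icc_self hx)).mono_of_mem_nhdsWithin hmem)
    rw [uIcc_of_le hT, uIcc_of_le hx.1]
    exact Icc_subset_Icc_right hx.2.le
  · have hx' : x ∈ Icc 0 T := Ico_subset_Icc_self hx
    have hslope : Tendsto (fun z => p (slope Z x z)) (𝓝[>] x) (𝓝 (p (Z' x))) :=
      (hp.tendsto _).comp ((hasDerivAt_iff_tendsto_slope.1 (hZ x hx')).mono_left
        (nhdsWithin_mono _ fun z hz => ne_of_gt hz))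
    refine ((hslope.eventually_lt_const ((hle x hx').trans_lt hr)).and
      self_mem_nhdsWithin).frequently.mono ?_
    rintro z ⟨hz, hxz⟩
    exact (slope_seminorm_comp_le p Z hxz).trans_lt hz

theorem segment_subset_of_seminorm_lt {E ι : Type*} [AddCommGroup E] [Module ℝ E]
    (N : ι → Seminorm ℝ E) {r : ι → EReal} {Λ : Set E} {x δ : E}
    (hball : ∀ y, (∀ i, (N i (y - x) : EReal) < r i) → y ∈ Λ) (hδ : ∀ i, (N i δ : EReal) < r i) :
    segment ℝ x (x + δ) ⊆ Λ := by
  rw [segment_eq_image']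
  rintro _ ⟨c, hc, rfl⟩
  refine hball _ fun i => lt_of_le_of_lt ?_ (hδ i)
  rw [EReal.coe_le_coe_iff]
  simp only [add_sub_cancel_left, map_smul_eq_mul (N i) c, Real.norm_of_nonneg hc.1]
  exact mul_le_of_le_one_left (apply_nonneg _ _) hc.2

end Seminorm

section LinearODE

theorem continuous_mulVecLin_toContinuousLinearMap {m n : Type*} [Finite m] [Fintype n] :
    Continuous fun A : Matrix m n ℝ => (mulVecLin A).toContinuousLinearMap := by
  have := Fintype.ofFinite m
  classical
  exact (LinearMap.toContinuousLinearMap.toLinearMap ∘ₗ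
    (Matrix.toLin' (R := ℝ) (m := m) (n := n)).toLinearMap).continuous_of_finiteDimensional

theorem hasDerivAt_matrix_mulVec {m n : Type*} [Finite m] [Fintype n] {A : ℝ → Matrix m n ℝ}
    {A' : Matrix m n ℝ} {y : ℝ → n → ℝ} {y' : n → ℝ} {t : ℝ}
    (hA : ∀ i j, HasDerivAt (fun τ => A τ i j) (A' i j) t) (hy : HasDerivAt y y' t) :
    HasDerivAt (fun τ => A τ *ᵥ y τ) (A' *ᵥ y t + A t *ᵥ y') t := by
  have := Fintype.ofFinite m
  rw [hasDerivAt_pi] at hy ⊢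
  intro i
  simpa [Matrix.mulVec, dotProduct, Finset.sum_add_distrib] using
    HasDerivAt.fun_sum (u := Finset.univ) fun j _ => (hA i j).mul (hy j)

variable {n : Type*} [Fintype n] {A R : ℝ → Matrix n n ℝ} {T t : ℝ}

theorem eq_zero_of_hasDerivAt_mulVec {y : ℝ → n → ℝ} (hA : ContinuousOn A (Icc 0 T))
    (hy : ∀ t ∈ Icc 0 T, HasDerivAt y (A t *ᵥ y t) t) (ht : t ∈ Icc 0 T) (hyt : y t = 0) :
    y 0 = 0 := by
  obtain ⟨C, hC⟩ := isCompact_Icc.exists_bound_of_continuousOn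
    (continuous_mulVecLin_toContinuousLinearMap.comp_continuousOn hA)
  have hsub : Icc 0 t ⊆ Icc 0 T := Icc_subset_Icc_right ht.2
  have hLip : ∀ τ ∈ Ioc 0 t, LipschitzOnWith C.toNNReal (fun x => A τ *ᵥ x) univ := fun τ hτ => by
    refine ((mulVecLin (A τ)).toContinuousLinearMap.lipschitz.weaken ?_).lipschitzOnWith
    rw [← NNReal.coe_le_coe, coe_nnnorm]
    exact (hC τ (hsub (Ioc_subset_Icc_self hτ))).trans (Real.le_coe_toNNReal C)
  exact ODE_solution_unique_of_mem_Icc_left (g := fun _ => 0) hLip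
    (fun τ hτ => (hy τ (hsub hτ)).continuousAt.continuousWithinAt)
    (fun τ hτ => (hy τ (hsub (Ioc_subset_Icc_self hτ))).hasDerivWithinAt) (fun _ _ => mem_univ _)
    continuousOn_const (fun τ _ => by simpa using hasDerivWithinAt_const τ _ (0 : n → ℝ))
    (fun _ _ => mem_univ _) hyt ⟨le_rfl, ht.1⟩

variable [DecidableEq n]

theorem det_ne_zero_of_hasDerivAt_mul (hA : ContinuousOn A (Icc 0 T)) (hR0 : R 0 = 1)
    (hR : ∀ t ∈ Icc 0 T, ∀ i j, HasDerivAt (fun τ => R τ i j) ((A t * R t) i j) t)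
    (ht : t ∈ Icc 0 T) : (R t).det ≠ 0 := by
  intro hdet
  obtain ⟨x, hx, hRx⟩ := Matrix.exists_mulVec_eq_zero_iff.2 hdet
  have hRx0 : R 0 *ᵥ x = 0 := eq_zero_of_hasDerivAt_mulVec (y := fun τ => R τ *ᵥ x) hA
    (fun τ hτ => by simpa using hasDerivAt_matrix_mulVec (hR τ hτ) (hasDerivAt_const τ x)) ht hRx
  exact hx (by simpa [hR0] using hRx0)

theorem hasDerivAt_inv_mulVec_of_eq_zero {W : ℝ → n → ℝ} {b : n → ℝ} (hdet : (R t).det ≠ 0)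
    (hR : ContinuousAt R t) (hWt : W t = 0) (hW : HasDerivAt W b t) :
    HasDerivAt (fun τ => (R τ)⁻¹ *ᵥ W τ) ((R t)⁻¹ *ᵥ b) t := by
  have hinv : ContinuousAt (fun τ => (R τ)⁻¹) t :=
    ContinuousAt.comp (f := R) (continuousAt_matrix_inv (R t) (by
      simpa [Ring.inverse_eq_inv'] using continuousAt_inv₀ hdet)) hR
  rw [hasDerivAt_iff_tendsto_slope] at hW ⊢
  have hlim := (Continuous.matrix_mulVec (A := fun q : Matrix n n ℝ × (n → ℝ) => q.1)
    continuous_fst continuous_snd).tendsto ((R t)⁻¹, b) |>.comp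
      ((hinv.tendsto.mono_left nhdsWithin_le_nhds).prodMk_nhds hW)
  refine hlim.congr fun τ => ?_
  simp only [Function.comp_apply, slope_def_module, hWt, sub_zero, Matrix.mulVec_smul,
    Matrix.mulVec_zero]

-- Freezing `z = (R t)⁻¹ *ᵥ y t` splits `R⁻¹ *ᵥ y` into the constant `z` and `R⁻¹ *ᵥ (y - R *ᵥ z)`,
-- so that no derivative of the inverse is needed.
theorem hasDerivAt_inv_mulVec {y : ℝ → n → ℝ} {b : n → ℝ} (hdet : (R t).det ≠ 0)
    (hR : ∀ i j, HasDerivAt (fun τ => R τ i j) ((A t * R t) i j) t)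
    (hy : HasDerivAt y (A t *ᵥ y t + b) t) :
    HasDerivAt (fun τ => (R τ)⁻¹ *ᵥ y τ) ((R t)⁻¹ *ᵥ b) t := by
  have hRc : ContinuousAt R t :=
    continuousAt_pi.2 fun i => continuousAt_pi.2 fun j => (hR i j).continuousAt
  have hunit : ∀ᶠ τ in 𝓝 t, (R τ).det ≠ 0 :=
    ((Continuous.matrix_det continuous_id).continuousAt.comp hRc).eventually_ne hdet
  set z := (R t)⁻¹ *ᵥ y t with hz
  have hRz : R t *ᵥ z = y t := by
    rw [hz, Matrix.mulVec_mulVec, Matrix.mul_nonsing_inv _ (isUnit_iff_ne_zero.2 hdet),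
      Matrix.one_mulVec]
  have hW : HasDerivAt (fun τ => y τ - R τ *ᵥ z) b t := by
    simpa [← Matrix.mulVec_mulVec, hRz] using
      hy.fun_sub (hasDerivAt_matrix_mulVec hR (hasDerivAt_const t z))
  refine ((hasDerivAt_inv_mulVec_of_eq_zero hdet hRc (by rw [hRz, sub_self]) hW).add_const
    z).congr_of_eventuallyEq ?_
  filter_upwards [hunit] with τ hτ
  rw [Matrix.mulVec_sub, Matrix.mulVec_mulVec, Matrix.nonsing_inv_mul _ (isUnit_iff_ne_zero.2 hτ),
    Matrix.one_mulVec, sub_add_cancel]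

theorem seminorm_le_of_hasDerivAt_mulVec_add {M : Type*} [Fintype M]
    {N : M → Seminorm ℝ (n → ℝ)} {NT : M → M → Seminorm ℝ (Matrix n n ℝ)}
    (hNT : ∀ A X μ, N μ (A *ᵥ X) ≤ ∑ ν, NT μ ν A * N ν X)
    (hT : 0 ≤ T) (hA : ContinuousOn A (Icc 0 T)) (hR0 : R 0 = 1)
    (hR : ∀ t ∈ Icc 0 T, ∀ i j, HasDerivAt (fun τ => R τ i j) ((A t * R t) i j) t)
    {Y b : ℝ → n → ℝ} (hY0 : Y 0 = 0)
    (hY : ∀ t ∈ Icc 0 T, HasDerivAt Y (A t *ᵥ Y t + b t) t)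
    {ρ : M → ℝ} {P : ℝ → M → M → ℝ} {β : ℝ → M → ℝ} {μ : M} (hρ : ∀ lam, NT μ lam (R T) ≤ ρ lam)
    (hP : ∀ t ∈ Icc 0 T, ∀ lam κ, NT lam κ (R t)⁻¹ ≤ P t lam κ)
    (hβ : ∀ t ∈ Icc 0 T, ∀ κ, N κ (b t) ≤ β t κ)
    (hcont : ∀ lam, ContinuousOn (fun t => ∑ κ, P t lam κ * β t κ) (Icc 0 T)) :
    N μ (Y T) ≤ ∑ lam, ρ lam * ∫ t in (0 : ℝ)..T, ∑ κ, P t lam κ * β t κ := by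
  have hdet : ∀ t ∈ Icc 0 T, (R t).det ≠ 0 := fun t ht => det_ne_zero_of_hasDerivAt_mul hA hR0 hR ht
  have hZ : ∀ lam, N lam ((R T)⁻¹ *ᵥ Y T) ≤ ∫ t in (0 : ℝ)..T, ∑ κ, P t lam κ * β t κ :=
    fun lam => by
    refine seminorm_le_integral_of_hasDerivAt (N lam) (Z := fun t => (R t)⁻¹ *ᵥ Y t) hT
      (by simp [hY0]) (fun t ht => hasDerivAt_inv_mulVec (hdet t ht) (hR t ht) (hY t ht))
      (hcont lam) fun t ht => (hNT _ _ _).trans (Finset.sum_le_sum fun κ _ => ?_)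
    exact mul_le_mul (hP t ht lam κ) (hβ t ht κ) (apply_nonneg _ _)
      ((apply_nonneg _ _).trans (hP t ht lam κ))
  have hRZ : Y T = R T *ᵥ ((R T)⁻¹ *ᵥ Y T) := by
    rw [Matrix.mulVec_mulVec, Matrix.mul_nonsing_inv _
      (isUnit_iff_ne_zero.2 (hdet T (right_mem_Icc.2 hT))), Matrix.one_mulVec]
  rw [hRZ]
  exact (hNT _ _ _).trans (Finset.sum_le_sum fun lam _ => mul_le_mul (hρ lam) (hZ lam)
    (apply_nonneg _ _) ((apply_nonneg _ _).trans (hρ lam)))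

end LinearODE

section PartialDerivatives

variable {E F : Type*} [NormedAddCommGroup E] [NormedAddCommGroup F] {Λ : Set E}

theorem continuous_of_continuousOn_uncurry {h : E → ℝ → F} {x : E}
    (hh : ContinuousOn (uncurry h) (Λ ×ˢ univ)) (hx : x ∈ Λ) : Continuous (h x) :=
  hh.comp_continuous (f := fun η : ℝ => (x, η)) (by fun_prop) fun _ => ⟨hx, mem_univ _⟩

variable [NormedSpace ℝ F]

theorem continuousOn_uncurry_primitive {h : E → ℝ → F} (a : ℝ)
    (hh : ContinuousOn (uncurry h) (Λ ×ˢ univ)) :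
    ContinuousOn (uncurry fun x θ => ∫ η in a..θ, h x η) (Λ ×ˢ univ) := by
  have hc : Continuous (uncurry fun (x : Λ) η => h x η) :=
    hh.comp_continuous (f := fun q : Λ × ℝ => ((q.1 : E), q.2)) (by fun_prop)
      fun q => ⟨q.1.2, mem_univ _⟩
  rw [continuousOn_iff_continuous_domRestrict]
  exact (intervalIntegral.continuous_parametric_primitive_of_continuous (μ := volume)
    (a₀ := a) hc).comp (g := fun p : Λ × ℝ => ∫ η in a..p.2, h p.1 η)
    (f := fun q : ↥(Λ ×ˢ (univ : Set ℝ)) => ((⟨q.1.1, q.2.1⟩ : Λ), q.1.2)) (by fun_prop)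

theorem continuousOn_intervalIntegral {h : E → ℝ → F} (a b : ℝ)
    (hh : ContinuousOn (uncurry h) (Λ ×ˢ univ)) :
    ContinuousOn (fun x => ∫ η in a..b, h x η) Λ :=
  (continuousOn_uncurry_primitive a hh).comp (f := fun x : E => (x, b)) (by fun_prop)
    fun _ hx => ⟨hx, mem_univ _⟩

theorem isLittleO_sub_sub_smul_of_hasDerivAt {φ φθ : E → ℝ → F} {x : E} {θ : ℝ}
    (hφθ : ∀ᶠ y in 𝓝 x, ∀ η, HasDerivAt (φ y) (φθ y η) η)
    (hcont : ContinuousAt (uncurry φθ) (x, θ)) :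
    (fun q : E × ℝ => φ q.1 q.2 - φ q.1 θ - (q.2 - θ) • φθ x θ) =o[𝓝 (x, θ)]
      fun q => q.2 - θ := by
  refine Asymptotics.isLittleO_iff.2 fun C hC => ?_
  obtain ⟨δ, hδ, hball⟩ := Metric.eventually_nhds_iff_ball.1
    ((continuous_fst.continuousAt.eventually hφθ).and
      (hcont.eventually (Metric.closedBall_mem_nhds _ hC)))
  filter_upwards [Metric.ball_mem_nhds _ hδ] with q hq
  rw [← ball_prod_same] at hball hq
  have hderiv : ∀ η ∈ Metric.ball θ δ, HasDerivWithinAt (fun η => φ q.1 η - η • φθ x θ)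
      (φθ q.1 η - φθ x θ) (Metric.ball θ δ) η := fun η hη => by
    simpa using! (((hball (q.1, η) ⟨hq.1, hη⟩).1 η).fun_sub
      ((hasDerivAt_id η).smul_const (φθ x θ))).hasDerivWithinAt
  have hmvt := (convex_ball θ δ).norm_image_sub_le_of_norm_hasDerivWithin_le hderiv
    (C := C) (fun η hη => mem_closedBall_iff_norm.1 (hball (q.1, η) ⟨hq.1, hη⟩).2)
    (Metric.mem_ball_self hδ) hq.2
  convert hmvt using 2
  module

variable [NormedSpace ℝ E]

/-- `φI` and `φθ` are the partial derivatives of `φ I θ` with respect to `I ∈ Λ` and to the real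
variable `θ`; they are not assumed continuous. -/
structure HasPartialDerivsOn (φ : E → ℝ → F) (φI : E → ℝ → E →L[ℝ] F) (φθ : E → ℝ → F)
    (Λ : Set E) : Prop where
  hasFDerivAt : ∀ I ∈ Λ, ∀ θ, HasFDerivAt (fun I' => φ I' θ) (φI I θ) I
  hasDerivAt : ∀ I ∈ Λ, ∀ θ, HasDerivAt (φ I) (φθ I θ) θ

namespace HasPartialDerivsOn

variable {φ φθ : E → ℝ → F} {φI : E → ℝ → E →L[ℝ] F} {I : E} {θ : ℝ}

theorem hasFDerivAt_uncurry (hφ : HasPartialDerivsOn φ φI φθ Λ) (hΛ : IsOpen Λ)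
    (hcont : ContinuousOn (uncurry φθ) (Λ ×ˢ univ)) (hI : I ∈ Λ) :
    HasFDerivAt (uncurry φ)
      ((φI I θ).coprod (ContinuousLinearMap.toSpanSingleton ℝ (φθ I θ))) (I, θ) := by
  have hslow : (fun q : E × ℝ => φ q.1 θ - φ I θ - φI I θ (q.1 - I)) =o[𝓝 (I, θ)]
      fun q => q - (I, θ) :=
    ((hasFDerivAt_iff_isLittleO.1 (hφ.hasFDerivAt I hI θ)).comp_tendsto
      (continuous_fst.tendsto (I, θ))).trans_isBigO
      (Asymptotics.isBigO_of_le _ fun q => norm_fst_le (q - (I, θ)))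
  have hfast : (fun q : E × ℝ => φ q.1 q.2 - φ q.1 θ - (q.2 - θ) • φθ I θ) =o[𝓝 (I, θ)]
      fun q => q - (I, θ) := by
    refine (isLittleO_sub_sub_smul_of_hasDerivAt ?_ ?_).trans_isBigO
      (Asymptotics.isBigO_of_le _ fun q => norm_snd_le (q - (I, θ)))
    · filter_upwards [hΛ.mem_nhds hI] with y hy using hφ.hasDerivAt y hy
    · exact hcont.continuousAt ((hΛ.prod isOpen_univ).mem_nhds ⟨hI, mem_univ _⟩)
  rw [hasFDerivAt_iff_isLittleO]
  refine (hslow.add hfast).congr_left fun q => ?_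
  simp only [uncurry, ContinuousLinearMap.coprod_apply, Prod.fst_sub, Prod.snd_sub,
    ContinuousLinearMap.toSpanSingleton_apply]
  abel

theorem continuousOn_uncurry (hφ : HasPartialDerivsOn φ φI φθ Λ) (hΛ : IsOpen Λ)
    (hcont : ContinuousOn (uncurry φθ) (Λ ×ˢ univ)) : ContinuousOn (uncurry φ) (Λ ×ˢ univ) :=
  fun _ hq => (hφ.hasFDerivAt_uncurry hΛ hcont hq.1).continuousAt.continuousWithinAt

theorem hasDerivAt_comp (hφ : HasPartialDerivsOn φ φI φθ Λ) (hΛ : IsOpen Λ)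
    (hcont : ContinuousOn (uncurry φθ) (Λ ×ˢ univ)) {x : ℝ → E} {y : ℝ → ℝ} {x' : E} {y' t : ℝ}
    (hxt : x t ∈ Λ) (hx : HasDerivAt x x' t) (hy : HasDerivAt y y' t) :
    HasDerivAt (fun τ => φ (x τ) (y τ)) (φI (x t) (y t) x' + y' • φθ (x t) (y t)) t := by
  simpa [Function.comp_def] using
    (hφ.hasFDerivAt_uncurry hΛ hcont hxt).comp_hasDerivAt (f := fun τ => (x τ, y τ)) t
      (hx.prodMk hy)

end HasPartialDerivsOn

theorem exists_continuousOn_hasFDerivAt_of_contDiffOn {h : E → ℝ → F} (hΛ : IsOpen Λ)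
    (hh : ContDiffOn ℝ 1 (uncurry h) (Λ ×ˢ univ)) :
    ∃ h' : E → ℝ → E →L[ℝ] F, ContinuousOn (uncurry h') (Λ ×ˢ univ) ∧
      ∀ x ∈ Λ, ∀ η, HasFDerivAt (fun y => h y η) (h' x η) x := by
  have hopen : IsOpen (Λ ×ˢ (univ : Set ℝ)) := hΛ.prod isOpen_univ
  refine ⟨fun x η => (fderiv ℝ (uncurry h) (x, η)).comp (ContinuousLinearMap.inl ℝ E ℝ),
    (hh.continuousOn_fderiv_of_isOpen hopen le_rfl).clm_comp continuousOn_const,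
    fun x hx η => ?_⟩
  exact ((hh.differentiableOn one_ne_zero).differentiableAt
    (hopen.mem_nhds (x := (x, η)) ⟨hx, mem_univ _⟩)).hasFDerivAt.comp
    (f := fun y : E => (y, η)) x (hasFDerivAt_prodMk_left x η)

variable [FiniteDimensional ℝ E]

theorem hasFDerivAt_intervalIntegral {h : E → ℝ → F} {h' : E → ℝ → E →L[ℝ] F} (hΛ : IsOpen Λ)
    (hh : ContinuousOn (uncurry h) (Λ ×ˢ univ)) (hh' : ContinuousOn (uncurry h') (Λ ×ˢ univ))
    (hd : ∀ x ∈ Λ, ∀ η, HasFDerivAt (fun y => h y η) (h' x η) x) (a b : ℝ) {x : E} (hx : x ∈ Λ) :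
    HasFDerivAt (fun y => ∫ η in a..b, h y η) (∫ η in a..b, h' x η) x := by
  obtain ⟨δ, hδ, hball⟩ := Metric.nhds_basis_closedBall.mem_iff.1 (hΛ.mem_nhds hx)
  obtain ⟨C, hC⟩ := ((isCompact_closedBall x δ).prod isCompact_uIcc).exists_bound_of_continuousOn
    (hh'.mono (prod_mono hball (subset_univ (uIcc a b))))
  refine intervalIntegral.hasFDerivAt_integral_of_dominated_of_fderiv_le
    (bound := fun _ => C) (F' := h') (Metric.closedBall_mem_nhds x hδ) ?_
    ((continuous_of_continuousOn_uncurry hh hx).intervalIntegrable _ _)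
    (continuous_of_continuousOn_uncurry hh' hx).aestronglyMeasurable ?_
    intervalIntegrable_const ?_
  · filter_upwards [hΛ.mem_nhds hx] with y hy using
      (continuous_of_continuousOn_uncurry hh hy).aestronglyMeasurable
  · exact .of_forall fun η hη y hy => hC (y, η) ⟨hy, uIoc_subset_uIcc hη⟩
  · exact .of_forall fun η _ y hy => hd y (hball hy) η

theorem contDiffOn_one_intervalIntegral {h : E → ℝ → F} (hΛ : IsOpen Λ)
    (hh : ContDiffOn ℝ 1 (uncurry h) (Λ ×ˢ univ)) (a b : ℝ) :
    ContDiffOn ℝ 1 (fun x => ∫ η in a..b, h x η) Λ := by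
  obtain ⟨h', hh', hd⟩ := exists_continuousOn_hasFDerivAt_of_contDiffOn hΛ hh
  have hderiv := fun x hx => hasFDerivAt_intervalIntegral hΛ hh.continuousOn hh' hd a b (x := x) hx
  rw [← zero_add (1 : WithTop ℕ∞), contDiffOn_succ_iff_fderiv_of_isOpen hΛ]
  refine ⟨fun x hx => (hderiv x hx).differentiableAt.differentiableWithinAt, by simp, ?_⟩
  exact contDiffOn_zero.2 ((continuousOn_intervalIntegral a b hh').congr
    fun x hx => (hderiv x hx).fderiv)

end PartialDerivatives

section ZeroMean

theorem eq_primitive_add_of_integral_eq_zero {F : Type*} [NormedAddCommGroup F] [NormedSpace ℝ F]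
    [CompleteSpace F] {s s' : ℝ → F} {T : ℝ} (hT : T ≠ 0)
    (hs : ∀ θ, HasDerivAt s (s' θ) θ) (hs' : Continuous s')
    (hmean : ∫ θ in (0 : ℝ)..T, s θ = 0) (θ : ℝ) :
    s θ = (∫ η in (0 : ℝ)..θ, s' η) + T⁻¹ • ∫ η in (0 : ℝ)..T, (η - T) • s' η := by
  have hparts := intervalIntegral.integral_smul_deriv_eq_deriv_smul (a := 0) (b := T)
    (u := fun η => η - T) (u' := fun _ => 1) (fun η _ => (hasDerivAt_id η).sub_const T)
    (fun η _ => hs η) intervalIntegrable_const (hs'.intervalIntegrable _ _)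
  simp only [sub_self, zero_smul, zero_sub, one_smul, hmean, sub_zero, neg_smul, neg_neg]
    at hparts
  rw [intervalIntegral.integral_eq_sub_of_hasDerivAt (fun η _ => hs η)
    (hs'.intervalIntegrable _ _), hparts, inv_smul_smul₀ hT, sub_add_cancel]

theorem HasPartialDerivsOn.continuousOn_fderiv_of_integral_eq_zero {E F : Type*}
    [NormedAddCommGroup E] [NormedSpace ℝ E] [FiniteDimensional ℝ E] [NormedAddCommGroup F]
    [NormedSpace ℝ F] [CompleteSpace F] {Λ : Set E} {s sθ : E → ℝ → F} {sI : E → ℝ → E →L[ℝ] F}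
    {T : ℝ} (hs : HasPartialDerivsOn s sI sθ Λ) (hT : T ≠ 0) (hΛ : IsOpen Λ)
    (hC : ContDiffOn ℝ 1 (uncurry sθ) (Λ ×ˢ univ))
    (hmean : ∀ x ∈ Λ, ∫ θ in (0 : ℝ)..T, s x θ = 0) :
    ContinuousOn (uncurry sI) (Λ ×ˢ univ) := by
  obtain ⟨A, hA, hd⟩ := exists_continuousOn_hasFDerivAt_of_contDiffOn hΛ hC
  have hweight : ContinuousOn (fun q : E × ℝ => q.2 - T) (Λ ×ˢ univ) := by fun_prop
  have hwA : ContinuousOn (uncurry fun x η => (η - T) • A x η) (Λ ×ˢ univ) := hweight.smul hA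
  have hsI : ∀ x ∈ Λ, ∀ θ, sI x θ = (∫ η in (0 : ℝ)..θ, A x η) +
      T⁻¹ • ∫ η in (0 : ℝ)..T, (η - T) • A x η := fun x hx θ => by
    refine (hs.hasFDerivAt x hx θ).unique
      (((hasFDerivAt_intervalIntegral hΛ hC.continuousOn hA hd 0 θ hx).add
      ((hasFDerivAt_intervalIntegral (h := fun x η => (η - T) • sθ x η) hΛ
        (hweight.smul hC.continuousOn) hwA
        (fun y hy η => (hd y hy η).const_smul (η - T)) 0 T hx).const_smul
          T⁻¹)).congr_of_eventuallyEq ?_)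
    filter_upwards [hΛ.mem_nhds hx] with y hy using eq_primitive_add_of_integral_eq_zero hT
      (hs.hasDerivAt y hy) (continuous_of_continuousOn_uncurry hC.continuousOn hy) (hmean y hy) θ
  have hint : ContinuousOn (fun q : E × ℝ => ∫ η in (0 : ℝ)..T, (η - T) • A q.1 η)
      (Λ ×ˢ univ) :=
    (continuousOn_intervalIntegral 0 T hwA).comp continuousOn_fst fun _ hq => hq.1
  exact ((continuousOn_uncurry_primitive 0 hA).add (hint.const_smul T⁻¹)).congr
    fun q hq => hsI q.1 hq.1 q.2

end ZeroMean

theorem contDiffOn_of_eq_add_smul {E F : Type*} [NormedAddCommGroup E] [NormedSpace ℝ E]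
    [NormedAddCommGroup F] [NormedSpace ℝ F] {Λ : Set E} {k : WithTop ℕ∞} {h ψ : E → ℝ → F}
    {hbar : E → F} {ω : E → ℝ} (hh : ContDiffOn ℝ k (uncurry h) (Λ ×ˢ univ))
    (hhbar : ContDiffOn ℝ k hbar Λ) (hω : ContDiffOn ℝ k ω Λ) (hω0 : ∀ I ∈ Λ, ω I ≠ 0)
    (heq : ∀ I ∈ Λ, ∀ θ, h I θ = hbar I + ω I • ψ I θ) :
    ContDiffOn ℝ k (uncurry ψ) (Λ ×ˢ univ) := by
  have hfst : MapsTo (Prod.fst : E × ℝ → E) (Λ ×ˢ univ) Λ := fun _ hq => hq.1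
  refine (((hω.comp contDiffOn_fst hfst).inv fun q hq => hω0 _ hq.1).smul
    (hh.sub (hhbar.comp contDiffOn_fst hfst))).congr fun q hq => ?_
  simp [uncurry, heq q.1 hq.1 q.2, hω0 q.1 hq.1]

section AveragingFramework

/-- The data of the perturbed one-frequency system `I' = ε f(I, Θ)`, `Θ' = ω(I) + ε g(I, Θ)` on
`Λ × 𝕋`, with angles encoded as real numbers. -/
structure OneFrequencySystem {E : Type*} [NormedAddCommGroup E] [NormedSpace ℝ E] (Λ : Set E)
    (f : E → ℝ → E) (g : E → ℝ → ℝ) (ω : E → ℝ) : Prop where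
  isOpen : IsOpen Λ
  contDiffOn_f : ContDiffOn ℝ 1 (uncurry f) (Λ ×ˢ univ)
  continuousOn_g : ContinuousOn (uncurry g) (Λ ×ˢ univ)
  contDiffOn_ω : ContDiffOn ℝ 1 ω Λ
  ω_ne_zero : ∀ I ∈ Λ, ω I ≠ 0

/-- The averaged vector field `fbar` and the auxiliary functions `s`, `p`, `v`, `q`, `w`, `u` of the
averaging method. A suffix `I` or `θ` marks the partial derivatives of a function; `v` and `w` are
normalized at the angle `θ₀`. -/
structure AuxiliaryFunctions {E : Type*} [NormedAddCommGroup E] [NormedSpace ℝ E] (Λ : Set E)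
    (f : E → ℝ → E) (g : E → ℝ → ℝ) (ω : E → ℝ) (θ₀ : ℝ) (fbar : E → E)
    (s : E → ℝ → E) (sI : E → ℝ → E →L[ℝ] E) (sθ p : E → ℝ → E) (pbar : E → E)
    (v : E → ℝ → E) (vI : E → ℝ → E →L[ℝ] E) (vθ q : E → ℝ → E)
    (w : E → ℝ → E) (wI : E → ℝ → E →L[ℝ] E) (wθ u : E → ℝ → E) : Prop where
  fbar_eq : ∀ I ∈ Λ, fbar I = (2 * π)⁻¹ • ∫ θ in (0 : ℝ)..2 * π, f I θ
  s_partials : HasPartialDerivsOn s sI sθ Λ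
  s_eq : ∀ I ∈ Λ, ∀ θ, f I θ = fbar I + ω I • sθ I θ
  s_average : ∀ I ∈ Λ, ∫ θ in (0 : ℝ)..2 * π, s I θ = 0
  p_eq : ∀ I ∈ Λ, ∀ θ, p I θ = sI I θ (f I θ) + g I θ • sθ I θ
  pbar_eq : ∀ I ∈ Λ, pbar I = (2 * π)⁻¹ • ∫ θ in (0 : ℝ)..2 * π, p I θ
  v_partials : HasPartialDerivsOn v vI vθ Λ
  v_eq : ∀ I ∈ Λ, ∀ θ, s I θ = ω I • vθ I θ
  v_zero : ∀ I ∈ Λ, v I θ₀ = 0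
  q_eq : ∀ I ∈ Λ, ∀ θ, q I θ = vI I θ (f I θ) + g I θ • vθ I θ
  w_partials : HasPartialDerivsOn w wI wθ Λ
  w_eq : ∀ I ∈ Λ, ∀ θ, p I θ = pbar I + ω I • wθ I θ
  w_zero : ∀ I ∈ Λ, w I θ₀ = 0
  u_eq : ∀ I ∈ Λ, ∀ θ, u I θ = wI I θ (f I θ) + g I θ • wθ I θ

/-- `(I, Θ)` solves the perturbed Cauchy problem with data `(I₀, θ₀)` on `[0, U / ε)`. -/
structure PerturbedSolution {E : Type*} [NormedAddCommGroup E] [NormedSpace ℝ E]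
    (f : E → ℝ → E) (g : E → ℝ → ℝ) (ω : E → ℝ) (ε : ℝ) (U : EReal) (I₀ : E) (θ₀ : ℝ)
    (I : ℝ → E) (Θ : ℝ → ℝ) : Prop where
  I_zero : I 0 = I₀
  Θ_zero : Θ 0 = θ₀
  hasDerivAt_I : ∀ t : ℝ, 0 ≤ t → ((ε * t : ℝ) : EReal) < U →
    HasDerivAt I (ε • f (I t) (Θ t)) t
  hasDerivAt_Θ : ∀ t : ℝ, 0 ≤ t → ((ε * t : ℝ) : EReal) < U →
    HasDerivAt Θ (ω (I t) + ε * g (I t) (Θ t)) t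

variable {E : Type*} [NormedAddCommGroup E] [NormedSpace ℝ E] {Λ : Set E}
  {f : E → ℝ → E} {g : E → ℝ → ℝ} {ω : E → ℝ}

theorem HasPartialDerivsOn.hasDerivAt_comp_perturbed {F : Type*} [NormedAddCommGroup F]
    [NormedSpace ℝ F] {φ φθ : E → ℝ → F} {φI : E → ℝ → E →L[ℝ] F}
    (hφ : HasPartialDerivsOn φ φI φθ Λ) (hΛ : IsOpen Λ)
    (hcont : ContinuousOn (uncurry φθ) (Λ ×ˢ univ)) {I : ℝ → E} {Θ : ℝ → ℝ} {ε t : ℝ}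
    (hIΛ : I t ∈ Λ) (hI : HasDerivAt I (ε • f (I t) (Θ t)) t)
    (hΘ : HasDerivAt Θ (ω (I t) + ε * g (I t) (Θ t)) t) :
    HasDerivAt (fun t => φ (I t) (Θ t))
      (ε • (φI (I t) (Θ t) (f (I t) (Θ t)) + g (I t) (Θ t) • φθ (I t) (Θ t))
        + ω (I t) • φθ (I t) (Θ t)) t := by
  convert! hφ.hasDerivAt_comp hΛ hcont hIΛ hI hΘ using 1
  rw [map_smul]
  module

variable [FiniteDimensional ℝ E] {θ₀ : ℝ} {fbar pbar : E → E} {s sθ p v vθ q w wθ u : E → ℝ → E}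
  {sI vI wI : E → ℝ → E →L[ℝ] E}

namespace AuxiliaryFunctions

variable (hX : AuxiliaryFunctions Λ f g ω θ₀ fbar s sI sθ p pbar v vI vθ q w wI wθ u)
  (hS : OneFrequencySystem Λ f g ω)

include hX hS

theorem contDiffOn_sθ : ContDiffOn ℝ 1 (uncurry sθ) (Λ ×ˢ univ) :=
  contDiffOn_of_eq_add_smul hS.contDiffOn_f
    (((contDiffOn_one_intervalIntegral hS.isOpen hS.contDiffOn_f 0 (2 * π)).const_smul
      (2 * π)⁻¹).congr hX.fbar_eq) hS.contDiffOn_ω hS.ω_ne_zero hX.s_eq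

theorem continuousOn_p : ContinuousOn (uncurry p) (Λ ×ˢ univ) := by
  have hsI : ContinuousOn (uncurry sI) (Λ ×ˢ univ) :=
    hX.s_partials.continuousOn_fderiv_of_integral_eq_zero Real.two_pi_pos.ne' hS.isOpen
      (hX.contDiffOn_sθ hS) hX.s_average
  exact ((hsI.clm_apply hS.contDiffOn_f.continuousOn).add
    (hS.continuousOn_g.smul (hX.contDiffOn_sθ hS).continuousOn)).congr
      fun x hx => hX.p_eq x.1 hx.1 x.2

theorem continuousOn_vθ : ContinuousOn (uncurry vθ) (Λ ×ˢ univ) := by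
  have hs : ContinuousOn (uncurry s) (Λ ×ˢ univ) :=
    hX.s_partials.continuousOn_uncurry hS.isOpen (hX.contDiffOn_sθ hS).continuousOn
  exact (contDiffOn_of_eq_add_smul (k := 0) (hbar := 0) (contDiffOn_zero.2 hs) contDiffOn_const
    (hS.contDiffOn_ω.of_le zero_le_one) hS.ω_ne_zero
    fun I hI θ => by simpa using hX.v_eq I hI θ).continuousOn

theorem continuousOn_wθ : ContinuousOn (uncurry wθ) (Λ ×ˢ univ) := by
  have hpbar : ContinuousOn pbar Λ :=
    ((continuousOn_intervalIntegral 0 (2 * π) (hX.continuousOn_p hS)).const_smul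
      (2 * π)⁻¹).congr hX.pbar_eq
  exact (contDiffOn_of_eq_add_smul (k := 0) (contDiffOn_zero.2 (hX.continuousOn_p hS))
    (contDiffOn_zero.2 hpbar) (hS.contDiffOn_ω.of_le zero_le_one) hS.ω_ne_zero
    hX.w_eq).continuousOn

variable {ε : ℝ} {U : EReal} {I₀ : E} {I : ℝ → E} {Θ : ℝ → ℝ}
  (hP : PerturbedSolution f g ω ε U I₀ θ₀ I Θ) {t : ℝ} (ht : 0 ≤ t)
  (htU : ((ε * t : ℝ) : EReal) < U) (hIΛ : I t ∈ Λ)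

include hP ht htU hIΛ

theorem hasDerivAt_s_comp : HasDerivAt (fun t => s (I t) (Θ t))
    (ε • p (I t) (Θ t) + (f (I t) (Θ t) - fbar (I t))) t := by
  rw [hX.p_eq _ hIΛ, sub_eq_of_eq_add' (hX.s_eq _ hIΛ _)]
  exact hX.s_partials.hasDerivAt_comp_perturbed hS.isOpen (hX.contDiffOn_sθ hS).continuousOn hIΛ
    (hP.hasDerivAt_I t ht htU) (hP.hasDerivAt_Θ t ht htU)

theorem hasDerivAt_v_comp : HasDerivAt (fun t => v (I t) (Θ t))
    (ε • q (I t) (Θ t) + s (I t) (Θ t)) t := by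
  rw [hX.q_eq _ hIΛ, hX.v_eq _ hIΛ]
  exact hX.v_partials.hasDerivAt_comp_perturbed hS.isOpen (hX.continuousOn_vθ hS) hIΛ
    (hP.hasDerivAt_I t ht htU) (hP.hasDerivAt_Θ t ht htU)

theorem hasDerivAt_w_comp : HasDerivAt (fun t => w (I t) (Θ t))
    (ε • u (I t) (Θ t) + (p (I t) (Θ t) - pbar (I t))) t := by
  rw [hX.u_eq _ hIΛ, sub_eq_of_eq_add' (hX.w_eq _ hIΛ _)]
  exact hX.w_partials.hasDerivAt_comp_perturbed hS.isOpen (hX.continuousOn_wθ hS) hIΛ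
    (hP.hasDerivAt_I t ht htU) (hP.hasDerivAt_Θ t ht htU)

end AuxiliaryFunctions

end AveragingFramework

section AveragedSystem

variable {n : Type*} [Fintype n] [DecidableEq n]

/-- `J` solves the averaged Cauchy problem on `[0, U)`, and `R`, `K` solve the linear problems along
`J`. The functions `F'` and `F''` are the first two derivatives of `fbar`, the indices of
`F'' I i j k` being those of `∂²fbarᵢ/∂Iⱼ∂Iₖ`, and `𝓜 = F'' fbar - F'²`. -/
structure AveragedFlow (Λ : Set (n → ℝ)) (fbar : (n → ℝ) → n → ℝ) (F' : (n → ℝ) → Matrix n n ℝ)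
    (F'' : (n → ℝ) → n → n → n → ℝ) (𝓜 : (n → ℝ) → Matrix n n ℝ) (pbar : (n → ℝ) → n → ℝ)
    (U : EReal) (I₀ : n → ℝ) (J : ℝ → n → ℝ) (R : ℝ → Matrix n n ℝ) (K : ℝ → n → ℝ) : Prop where
  hasFDerivAt_fbar : ∀ I ∈ Λ, HasFDerivAt fbar (mulVecLin (F' I)).toContinuousLinearMap I
  hasFDerivAt_jacobian : ∀ I ∈ Λ, ∀ i k, HasFDerivAt (fun I' => F' I' i k)
    (∑ j, F'' I i j k • (ContinuousLinearMap.proj j : (n → ℝ) →L[ℝ] ℝ)) I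
  𝓜_eq : ∀ I ∈ Λ, ∀ i k, 𝓜 I i k = (∑ j, F'' I i j k * fbar I j) - (F' I * F' I) i k
  J_zero : J 0 = I₀
  hasDerivAt_J : ∀ τ : ℝ, 0 ≤ τ → (τ : EReal) < U → HasDerivAt J (fbar (J τ)) τ
  R_zero : R 0 = 1
  hasDerivAt_R : ∀ τ : ℝ, 0 ≤ τ → (τ : EReal) < U → ∀ i j,
    HasDerivAt (fun τ' => R τ' i j) ((F' (J τ) * R τ) i j) τ
  K_zero : K 0 = 0
  hasDerivAt_K : ∀ τ : ℝ, 0 ≤ τ → (τ : EReal) < U →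
    HasDerivAt K (F' (J τ) *ᵥ K τ + pbar (J τ)) τ

theorem hasDerivAt_comp_const_mul {F : Type*} [NormedAddCommGroup F] [NormedSpace ℝ F]
    {y : ℝ → F} {y' : F} {ε t : ℝ} (hy : HasDerivAt y y' (ε * t)) :
    HasDerivAt (fun t => y (ε * t)) (ε • y') t :=
  hy.scomp t (by simpa using (hasDerivAt_id t).const_mul ε)

namespace AveragedFlow

variable {Λ : Set (n → ℝ)} {fbar pbar : (n → ℝ) → n → ℝ} {F' 𝓜 : (n → ℝ) → Matrix n n ℝ}
  {F'' : (n → ℝ) → n → n → n → ℝ} {U : EReal} {I₀ : n → ℝ} {J K : ℝ → n → ℝ}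
  {R : ℝ → Matrix n n ℝ} (hA : AveragedFlow Λ fbar F' F'' 𝓜 pbar U I₀ J R K)
  {ε t : ℝ}

include hA

theorem hasDerivAt_rescaled_R (hτ : 0 ≤ ε * t) (hτU : ((ε * t : ℝ) : EReal) < U) (i j : n) :
    HasDerivAt (fun t => R (ε * t) i j) (((ε • F' (J (ε * t))) * R (ε * t)) i j) t := by
  rw [Matrix.smul_mul]
  exact hasDerivAt_comp_const_mul (hA.hasDerivAt_R _ hτ hτU i j)

theorem hasDerivAt_rescaled_jacobian (hτ : 0 ≤ ε * t) (hτU : ((ε * t : ℝ) : EReal) < U)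
    (hJΛ : J (ε * t) ∈ Λ) (i k : n) : HasDerivAt (fun t => F' (J (ε * t)) i k)
      ((ε • (𝓜 (J (ε * t)) + F' (J (ε * t)) * F' (J (ε * t)))) i k) t := by
  convert! hasDerivAt_comp_const_mul
    ((hA.hasFDerivAt_jacobian _ hJΛ i k).comp_hasDerivAt _ (hA.hasDerivAt_J _ hτ hτU)) using 1
  simp [hA.𝓜_eq _ hJΛ]

theorem continuousOn_rescaled_jacobian {S : Set ℝ} (hτ : ∀ t ∈ S, 0 ≤ ε * t)
    (hτU : ∀ t ∈ S, ((ε * t : ℝ) : EReal) < U) (hJΛ : ∀ t ∈ S, J (ε * t) ∈ Λ) :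
    ContinuousOn (fun t => F' (J (ε * t))) S := fun t ht =>
  (continuousAt_pi.2 fun i => continuousAt_pi.2 fun k => (hA.hasDerivAt_rescaled_jacobian
    (hτ t ht) (hτU t ht) (hJΛ t ht) i k).continuousAt).continuousWithinAt

end AveragedFlow

end AveragedSystem

section CorrectedError

variable {n : Type*} [Fintype n]

/-- The averaging error `L` of the paper, as a function of the fast time `t`. -/
noncomputable def averagingError {E : Type*} [AddCommGroup E] [Module ℝ E] (ε : ℝ) (I J : ℝ → E)
    (t : ℝ) : E :=
  ε⁻¹ • (I t - J (ε * t))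

theorem add_smul_averagingError {E : Type*} [AddCommGroup E] [Module ℝ E] {ε : ℝ} (hε : ε ≠ 0)
    (I J : ℝ → E) (t : ℝ) : J (ε * t) + ε • averagingError ε I J t = I t := by
  rw [averagingError, smul_inv_smul₀ hε, add_sub_cancel]

theorem hasDerivAt_averagingError {E : Type*} [NormedAddCommGroup E] [NormedSpace ℝ E] {ε t : ℝ}
    (hε : ε ≠ 0) {I J : ℝ → E} {x y : E} (hI : HasDerivAt I (ε • x) t)
    (hJ : HasDerivAt J y (ε * t)) : HasDerivAt (averagingError ε I J) (x - y) t := by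
  have hdiff := (hI.fun_sub (hasDerivAt_comp_const_mul hJ)).const_smul ε⁻¹
  rwa [← smul_sub, inv_smul_smul₀ hε] at hdiff

/-- The action `C X Y` of a tensor `C` of type `(1, 2)` on two vectors. -/
def tensorApply (C : n → n → n → ℝ) (X Y : n → ℝ) : n → ℝ :=
  fun i => ∑ j, ∑ k, C i j k * X j * Y k

theorem tensorApply_smul_smul (C : n → n → n → ℝ) (r : ℝ) (X Y : n → ℝ) :
    tensorApply C (r • X) (r • Y) = r ^ 2 • tensorApply C X Y := by
  ext i
  simp only [tensorApply, Pi.smul_apply, smul_eq_mul, Finset.mul_sum]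
  exact Finset.sum_congr rfl fun j _ => Finset.sum_congr rfl fun k _ => by ring

/-- The functions `𝓖` and `𝓗` giving the first order remainder of `pbar` and the second order
remainder of `fbar` along segments contained in `Λ`. -/
structure TaylorRemainders (Λ : Set (n → ℝ)) (fbar : (n → ℝ) → n → ℝ)
    (F' : (n → ℝ) → Matrix n n ℝ) (pbar : (n → ℝ) → n → ℝ)
    (𝓖 : (n → ℝ) → (n → ℝ) → Matrix n n ℝ) (𝓗 : (n → ℝ) → (n → ℝ) → n → n → n → ℝ) : Prop where
  pbar_add : ∀ I δ, segment ℝ I (I + δ) ⊆ Λ → pbar (I + δ) = pbar I + 𝓖 I δ *ᵥ δ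
  fbar_add : ∀ I δ, segment ℝ I (I + δ) ⊆ Λ →
    fbar (I + δ) = fbar I + F' I *ᵥ δ + (1 / 2 : ℝ) • tensorApply (𝓗 I δ) δ δ

/-- The near-identity modification of the averaging error whose derivative is, up to terms of order
`ε ^ 2`, given by the linearized averaged system; `σ` is the value of `s` at the initial datum. -/
noncomputable def correctedError (ε : ℝ) (σ : n → ℝ) (s v w : (n → ℝ) → ℝ → n → ℝ)
    (F' : (n → ℝ) → Matrix n n ℝ) (I : ℝ → n → ℝ) (Θ : ℝ → ℝ) (J : ℝ → n → ℝ)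
    (R : ℝ → Matrix n n ℝ) (K : ℝ → n → ℝ) (t : ℝ) : n → ℝ :=
  averagingError ε I J t - s (I t) (Θ t) + R (ε * t) *ᵥ σ + K (ε * t)
    + ε • (w (I t) (Θ t) - F' (J (ε * t)) *ᵥ v (I t) (Θ t))

/-- The coefficient of `ε ^ 2` in the derivative of `correctedError`. -/
noncomputable def correctionForcing (ε : ℝ) (v w q u : (n → ℝ) → ℝ → n → ℝ)
    (F' 𝓜 : (n → ℝ) → Matrix n n ℝ) (𝓖 : (n → ℝ) → (n → ℝ) → Matrix n n ℝ)
    (𝓗 : (n → ℝ) → (n → ℝ) → n → n → n → ℝ) (I : ℝ → n → ℝ) (Θ : ℝ → ℝ) (J : ℝ → n → ℝ)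
    (t : ℝ) : n → ℝ :=
  u (I t) (Θ t) - F' (J (ε * t)) *ᵥ (w (I t) (Θ t) + q (I t) (Θ t)) - 𝓜 (J (ε * t)) *ᵥ v (I t) (Θ t)
    - 𝓖 (J (ε * t)) (ε • averagingError ε I J t) *ᵥ averagingError ε I J t
    + (1 / 2 : ℝ) • tensorApply (𝓗 (J (ε * t)) (ε • averagingError ε I J t))
        (averagingError ε I J t) (averagingError ε I J t)

theorem correctedError_deriv_eq {A M G R : Matrix n n ℝ} {H : n → n → n → ℝ} {ε : ℝ}
    {f fI fJ p pI pJ q s u v w ℓ σ K : n → ℝ}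
    (hf : fI = fJ + A *ᵥ (ε • ℓ) + (1 / 2 : ℝ) • tensorApply H (ε • ℓ) (ε • ℓ))
    (hp : pI = pJ + G *ᵥ (ε • ℓ)) :
    (f - fJ) - (ε • p + (f - fI)) + ((ε • A) * R) *ᵥ σ + ε • (A *ᵥ K + pJ)
        + ε • ((ε • u + (p - pI)) - ((ε • (M + A * A)) *ᵥ v + A *ᵥ (ε • q + s))) =
      (ε • A) *ᵥ (ℓ - s + R *ᵥ σ + K + ε • (w - A *ᵥ v))
        + ε ^ 2 • (u - A *ᵥ (w + q) - M *ᵥ v - G *ᵥ ℓ + (1 / 2 : ℝ) • tensorApply H ℓ ℓ) := by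
  simp only [hf, hp, tensorApply_smul_smul, Matrix.mulVec_add, Matrix.mulVec_sub,
    Matrix.mulVec_smul, Matrix.add_mulVec, Matrix.smul_mulVec, ← Matrix.mulVec_mulVec,
    Matrix.smul_mul]
  module

variable [DecidableEq n] {Λ : Set (n → ℝ)} {f : (n → ℝ) → ℝ → n → ℝ} {g : (n → ℝ) → ℝ → ℝ}
  {ω : (n → ℝ) → ℝ} {θ₀ ε : ℝ} {fbar pbar : (n → ℝ) → n → ℝ}
  {s sθ p v vθ q w wθ u : (n → ℝ) → ℝ → n → ℝ} {sI vI wI : (n → ℝ) → ℝ → (n → ℝ) →L[ℝ] n → ℝ}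
  {F' 𝓜 : (n → ℝ) → Matrix n n ℝ} {F'' : (n → ℝ) → n → n → n → ℝ}
  {𝓖 : (n → ℝ) → (n → ℝ) → Matrix n n ℝ} {𝓗 : (n → ℝ) → (n → ℝ) → n → n → n → ℝ} {U : EReal}
  {I₀ : n → ℝ} {I J K : ℝ → n → ℝ} {Θ : ℝ → ℝ} {R : ℝ → Matrix n n ℝ}

theorem correctedError_zero
    (hX : AuxiliaryFunctions Λ f g ω θ₀ fbar s sI sθ p pbar v vI vθ q w wI wθ u)
    (hA : AveragedFlow Λ fbar F' F'' 𝓜 pbar U I₀ J R K)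
    (hP : PerturbedSolution f g ω ε U I₀ θ₀ I Θ) (hI₀ : I₀ ∈ Λ) :
    correctedError ε (s I₀ θ₀) s v w F' I Θ J R K 0 = 0 := by
  simp [correctedError, averagingError, hP.I_zero, hP.Θ_zero, hA.J_zero, hA.R_zero, hA.K_zero,
    hX.v_zero I₀ hI₀, hX.w_zero I₀ hI₀]

theorem continuousOn_seminorm_averagingError (hε : 0 < ε)
    (hA : AveragedFlow Λ fbar F' F'' 𝓜 pbar U I₀ J R K)
    (hP : PerturbedSolution f g ω ε U I₀ θ₀ I Θ) (p : Seminorm ℝ (n → ℝ)) {S : Set ℝ}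
    (ht : ∀ t ∈ S, 0 ≤ t) (htU : ∀ t ∈ S, ((ε * t : ℝ) : EReal) < U) :
    ContinuousOn (fun t => p (averagingError ε I J t)) S :=
  (continuous_seminorm_of_finiteDimensional p).comp_continuousOn fun t hS =>
    (hasDerivAt_averagingError hε.ne' (hP.hasDerivAt_I t (ht t hS) (htU t hS))
      (hA.hasDerivAt_J _ (mul_nonneg hε.le (ht t hS)) (htU t hS))).continuousAt.continuousWithinAt

theorem hasDerivAt_correctedError (hε : 0 < ε) (hS : OneFrequencySystem Λ f g ω)
    (hX : AuxiliaryFunctions Λ f g ω θ₀ fbar s sI sθ p pbar v vI vθ q w wI wθ u)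
    (hA : AveragedFlow Λ fbar F' F'' 𝓜 pbar U I₀ J R K)
    (hP : PerturbedSolution f g ω ε U I₀ θ₀ I Θ) (hT : TaylorRemainders Λ fbar F' pbar 𝓖 𝓗)
    {t : ℝ} (ht : 0 ≤ t) (htU : ((ε * t : ℝ) : EReal) < U)
    (hseg : segment ℝ (J (ε * t)) (J (ε * t) + ε • averagingError ε I J t) ⊆ Λ) :
    HasDerivAt (correctedError ε (s I₀ θ₀) s v w F' I Θ J R K)
      ((ε • F' (J (ε * t))) *ᵥ correctedError ε (s I₀ θ₀) s v w F' I Θ J R K t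
        + ε ^ 2 • correctionForcing ε v w q u F' 𝓜 𝓖 𝓗 I Θ J t) t := by
  have hτ : 0 ≤ ε * t := mul_nonneg hε.le ht
  have hfbar := hT.fbar_add _ _ hseg
  have hpbar := hT.pbar_add _ _ hseg
  have hJΛ : J (ε * t) ∈ Λ := hseg (left_mem_segment ℝ _ _)
  have hIΛ := hseg (right_mem_segment ℝ _ _)
  rw [add_smul_averagingError hε.ne'] at hfbar hpbar hIΛ
  have hL := hasDerivAt_averagingError hε.ne' (hP.hasDerivAt_I t ht htU) (hA.hasDerivAt_J _ hτ htU)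
  have hRσ := hasDerivAt_matrix_mulVec (hA.hasDerivAt_rescaled_R hτ htU)
    (hasDerivAt_const t (s I₀ θ₀))
  have hK := hasDerivAt_comp_const_mul (hA.hasDerivAt_K _ hτ htU)
  have hFv := hasDerivAt_matrix_mulVec (hA.hasDerivAt_rescaled_jacobian hτ htU hJΛ)
    (hX.hasDerivAt_v_comp hS hP ht htU hIΛ)
  convert! (((hL.sub (hX.hasDerivAt_s_comp hS hP ht htU hIΛ)).add hRσ).add hK).add
    (((hX.hasDerivAt_w_comp hS hP ht htU hIΛ).sub hFv).const_smul ε) using 1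
  rw [Matrix.mulVec_zero, add_zero]
  exact (correctedError_deriv_eq hfbar hpbar).symm

end CorrectedError

section RemainderEstimator

variable {n M : Type*} [Fintype n] [Fintype M]

/-- The seminorms `NT` on matrices and `NT2` on tensors of type `(1, 2)` are consistent with the
family `N` of seminorms on vectors. -/
structure ConsistentSeminorms (N : M → Seminorm ℝ (n → ℝ))
    (NT : M → M → Seminorm ℝ (Matrix n n ℝ)) (NT2 : M → M → M → Seminorm ℝ (n → n → n → ℝ)) :
    Prop where
  mulVec_le : ∀ A X μ, N μ (A *ᵥ X) ≤ ∑ ν, NT μ ν A * N ν X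
  tensorApply_le : ∀ C X Y μ, N μ (tensorApply C X Y) ≤ ∑ ν, ∑ κ, NT2 μ ν κ C * N ν X * N κ Y

/-- One component of the function `γ` of the paper: `c`, `d`, `e` are the values of the estimators,
`ℓ` stands for the seminorms of the averaging error. -/
noncomputable def remainderEstimator (c : ℝ) (d : M → ℝ) (e : M → M → ℝ) (ℓ : M → ℝ) : ℝ :=
  c + (∑ ν, d ν * ℓ ν) + (1 / 2 : ℝ) * ∑ ν, ∑ κ, e ν κ * ℓ ν * ℓ κ

theorem continuousOn_remainderEstimator {X : Type*} [TopologicalSpace X] {S : Set X} {c : X → ℝ}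
    {d ℓ : X → M → ℝ} {e : X → M → M → ℝ} (hc : ContinuousOn c S)
    (hd : ∀ ν, ContinuousOn (fun x => d x ν) S) (he : ∀ ν κ, ContinuousOn (fun x => e x ν κ) S)
    (hℓ : ∀ ν, ContinuousOn (fun x => ℓ x ν) S) :
    ContinuousOn (fun x => remainderEstimator (c x) (d x) (e x) (ℓ x)) S :=
  (hc.add (continuousOn_finsetSum _ fun ν _ => (hd ν).mul (hℓ ν))).add
    (continuousOn_const.mul (continuousOn_finsetSum _ fun ν _ => continuousOn_finsetSum _ fun κ _ =>
      ((he ν κ).mul (hℓ ν)).mul (hℓ κ)))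

theorem ConsistentSeminorms.sub_mulVec_add_le {N : M → Seminorm ℝ (n → ℝ)}
    {NT : M → M → Seminorm ℝ (Matrix n n ℝ)} {NT2 : M → M → M → Seminorm ℝ (n → n → n → ℝ)}
    (hN : ConsistentSeminorms N NT NT2) {x ℓ : n → ℝ} {G : Matrix n n ℝ} {H : n → n → n → ℝ}
    {κ : M} {c : ℝ} {d : M → ℝ} {e : M → M → ℝ} (hc : N κ x ≤ c) (hd : ∀ ν, NT κ ν G ≤ d ν)
    (he : ∀ ν ν', NT2 κ ν ν' H ≤ e ν ν') :
    N κ (x - G *ᵥ ℓ + (1 / 2 : ℝ) • tensorApply H ℓ ℓ) ≤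
      remainderEstimator c d e fun ν => N ν ℓ := by
  refine (map_add_le_add _ _ _).trans (add_le_add ((map_sub_le_add _ _ _).trans
    (add_le_add hc ((hN.mulVec_le _ _ _).trans ?_))) ?_)
  · gcongr with ν
    exact hd ν
  · rw [map_smul_eq_mul, Real.norm_of_nonneg one_half_pos.le]
    gcongr
    refine (hN.tensorApply_le _ _ _ _).trans ?_
    gcongr with ν _ ν'
    exact he ν ν'

end RemainderEstimator

section Estimators

variable {n M : Type*} [Fintype n]

/-- The set `Γ_ρ` of the paper. -/
def estimatorDomain (U : EReal) (ρ : ℝ → M → EReal) : Set (ℝ × (M → ℝ)) :=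
  {x | 0 ≤ x.1 ∧ (x.1 : EReal) < U ∧ ∀ μ, 0 ≤ x.2 μ ∧ (x.2 μ : EReal) < ρ x.1 μ}

/-- The functions `a`, `b`, `c`, `d`, `e` on `Γ_ρ` and `Rb`, `Pb` on `[0, U)` bound the seminorms
of the quantities entering the error estimate; `σ` is the value of `s` at the initial datum. -/
structure ErrorEstimators [DecidableEq n] (N : M → Seminorm ℝ (n → ℝ))
    (NT : M → M → Seminorm ℝ (Matrix n n ℝ)) (NT2 : M → M → M → Seminorm ℝ (n → n → n → ℝ))
    (U : EReal) (ρ : ℝ → M → EReal) (σ : n → ℝ) (s v w q u : (n → ℝ) → ℝ → n → ℝ)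
    (F' 𝓜 : (n → ℝ) → Matrix n n ℝ) (𝓖 : (n → ℝ) → (n → ℝ) → Matrix n n ℝ)
    (𝓗 : (n → ℝ) → (n → ℝ) → n → n → n → ℝ) (J : ℝ → n → ℝ) (R : ℝ → Matrix n n ℝ)
    (K : ℝ → n → ℝ) (a b c : ℝ → (M → ℝ) → M → ℝ) (d : ℝ → (M → ℝ) → M → M → ℝ)
    (e : ℝ → (M → ℝ) → M → M → M → ℝ) (Rb Pb : ℝ → M → M → ℝ) : Prop where
  continuousOn_c : ∀ μ, ContinuousOn (fun x : ℝ × (M → ℝ) => c x.1 x.2 μ) (estimatorDomain U ρ)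
  continuousOn_d : ∀ μ ν,
    ContinuousOn (fun x : ℝ × (M → ℝ) => d x.1 x.2 μ ν) (estimatorDomain U ρ)
  continuousOn_e : ∀ μ ν κ,
    ContinuousOn (fun x : ℝ × (M → ℝ) => e x.1 x.2 μ ν κ) (estimatorDomain U ρ)
  continuousOn_Pb : ∀ μ ν, ContinuousOn (fun τ => Pb τ μ ν) {τ : ℝ | 0 ≤ τ ∧ (τ : EReal) < U}
  s_le : ∀ τ : ℝ, 0 ≤ τ → (τ : EReal) < U → ∀ δ : n → ℝ, (∀ μ, (N μ δ : EReal) < ρ τ μ) →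
    ∀ θ μ, N μ (s (J τ + δ) θ - R τ *ᵥ σ - K τ) ≤ a τ (fun lam => N lam δ) μ
  w_sub_le : ∀ τ : ℝ, 0 ≤ τ → (τ : EReal) < U → ∀ δ : n → ℝ, (∀ μ, (N μ δ : EReal) < ρ τ μ) →
    ∀ θ μ, N μ (w (J τ + δ) θ - F' (J τ) *ᵥ v (J τ + δ) θ) ≤ b τ (fun lam => N lam δ) μ
  u_sub_le : ∀ τ : ℝ, 0 ≤ τ → (τ : EReal) < U → ∀ δ : n → ℝ, (∀ μ, (N μ δ : EReal) < ρ τ μ) →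
    ∀ θ μ, N μ (u (J τ + δ) θ - F' (J τ) *ᵥ (w (J τ + δ) θ + q (J τ + δ) θ)
      - 𝓜 (J τ) *ᵥ v (J τ + δ) θ) ≤ c τ (fun lam => N lam δ) μ
  𝓖_le : ∀ τ : ℝ, 0 ≤ τ → (τ : EReal) < U → ∀ δ : n → ℝ, (∀ μ, (N μ δ : EReal) < ρ τ μ) →
    ∀ μ ν, NT μ ν (𝓖 (J τ) δ) ≤ d τ (fun lam => N lam δ) μ ν
  𝓗_le : ∀ τ : ℝ, 0 ≤ τ → (τ : EReal) < U → ∀ δ : n → ℝ, (∀ μ, (N μ δ : EReal) < ρ τ μ) →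
    ∀ μ ν κ, NT2 μ ν κ (𝓗 (J τ) δ) ≤ e τ (fun lam => N lam δ) μ ν κ
  R_le : ∀ τ : ℝ, 0 ≤ τ → (τ : EReal) < U → ∀ μ ν, NT μ ν (R τ) ≤ Rb τ μ ν
  R_inv_le : ∀ τ : ℝ, 0 ≤ τ → (τ : EReal) < U → ∀ μ ν, NT μ ν (R τ)⁻¹ ≤ Pb τ μ ν

variable [DecidableEq n] {N : M → Seminorm ℝ (n → ℝ)} {NT : M → M → Seminorm ℝ (Matrix n n ℝ)}
  {NT2 : M → M → M → Seminorm ℝ (n → n → n → ℝ)} {U : EReal} {ρ : ℝ → M → EReal} {σ : n → ℝ}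
  {s v w q u : (n → ℝ) → ℝ → n → ℝ} {F' 𝓜 : (n → ℝ) → Matrix n n ℝ}
  {𝓖 : (n → ℝ) → (n → ℝ) → Matrix n n ℝ} {𝓗 : (n → ℝ) → (n → ℝ) → n → n → n → ℝ}
  {I J K : ℝ → n → ℝ} {Θ : ℝ → ℝ} {R : ℝ → Matrix n n ℝ} {a b c : ℝ → (M → ℝ) → M → ℝ}
  {d : ℝ → (M → ℝ) → M → M → ℝ} {e : ℝ → (M → ℝ) → M → M → M → ℝ} {Rb Pb : ℝ → M → M → ℝ}
  {ε T t : ℝ}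

namespace ErrorEstimators

variable (hE : ErrorEstimators N NT NT2 U ρ σ s v w q u F' 𝓜 𝓖 𝓗 J R K a b c d e Rb Pb)

include hE

theorem averagingError_le (hε : 0 < ε) (ht : 0 ≤ t) (htU : ((ε * t : ℝ) : EReal) < U)
    (hδ : ∀ μ, (N μ (ε • averagingError ε I J t) : EReal) < ρ (ε * t) μ) (μ : M) :
    N μ (averagingError ε I J t) ≤ a (ε * t) (fun ν => ε * N ν (averagingError ε I J t)) μ
      + ε * b (ε * t) (fun ν => ε * N ν (averagingError ε I J t)) μ
      + N μ (correctedError ε σ s v w F' I Θ J R K t) := by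
  have hτ : 0 ≤ ε * t := mul_nonneg hε.le ht
  have ha := hE.s_le _ hτ htU _ hδ (Θ t) μ
  have hb := hE.w_sub_le _ hτ htU _ hδ (Θ t) μ
  simp only [add_smul_averagingError hε.ne', seminorm_smul_of_pos _ hε] at ha hb
  have hdecomp : averagingError ε I J t = (s (I t) (Θ t) - R (ε * t) *ᵥ σ - K (ε * t)
      - ε • (w (I t) (Θ t) - F' (J (ε * t)) *ᵥ v (I t) (Θ t)))
      + correctedError ε σ s v w F' I Θ J R K t := by
    rw [correctedError]
    abel
  calc N μ (averagingError ε I J t)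
      ≤ N μ (s (I t) (Θ t) - R (ε * t) *ᵥ σ - K (ε * t))
          + N μ (ε • (w (I t) (Θ t) - F' (J (ε * t)) *ᵥ v (I t) (Θ t)))
          + N μ (correctedError ε σ s v w F' I Θ J R K t) := by
        conv_lhs => rw [hdecomp]
        exact (map_add_le_add _ _ _).trans (add_le_add_left (map_sub_le_add _ _ _) _)
    _ ≤ _ := by
        rw [seminorm_smul_of_pos _ hε]
        gcongr

end ErrorEstimators

variable [Fintype M]

namespace ErrorEstimators

variable (hE : ErrorEstimators N NT NT2 U ρ σ s v w q u F' 𝓜 𝓖 𝓗 J R K a b c d e Rb Pb)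

include hE

theorem continuousOn_integrand {ℓ : ℝ → M → ℝ} {S : Set ℝ}
    (hℓ : ∀ ν, ContinuousOn (fun t => ℓ t ν) S)
    (hdom : ∀ t ∈ S, (ε * t, fun ν => ε * ℓ t ν) ∈ estimatorDomain U ρ) (lam : M) :
    ContinuousOn (fun t => ∑ κ, Pb (ε * t) lam κ *
      remainderEstimator (c (ε * t) (fun ν => ε * ℓ t ν) κ) (d (ε * t) (fun ν => ε * ℓ t ν) κ)
        (e (ε * t) (fun ν => ε * ℓ t ν) κ) (ℓ t)) S := by
  have hpath : ContinuousOn (fun t => (ε * t, fun ν => ε * ℓ t ν)) S := by fun_prop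
  refine continuousOn_finsetSum _ fun κ _ => ContinuousOn.mul ?_ ?_
  · exact (hE.continuousOn_Pb lam κ).comp (by fun_prop : ContinuousOn (fun t => ε * t) S)
      fun t ht => ⟨(hdom t ht).1, (hdom t ht).2.1⟩
  · exact continuousOn_remainderEstimator ((hE.continuousOn_c κ).comp hpath hdom)
      (fun ν => (hE.continuousOn_d κ ν).comp hpath hdom)
      (fun ν ν' => (hE.continuousOn_e κ ν ν').comp hpath hdom) hℓ

theorem correctionForcing_le (hN : ConsistentSeminorms N NT NT2) (hε : 0 < ε) (ht : 0 ≤ t)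
    (htU : ((ε * t : ℝ) : EReal) < U)
    (hδ : ∀ μ, (N μ (ε • averagingError ε I J t) : EReal) < ρ (ε * t) μ) (κ : M) :
    N κ (correctionForcing ε v w q u F' 𝓜 𝓖 𝓗 I Θ J t) ≤
      remainderEstimator (c (ε * t) (fun ν => ε * N ν (averagingError ε I J t)) κ)
        (d (ε * t) (fun ν => ε * N ν (averagingError ε I J t)) κ)
        (e (ε * t) (fun ν => ε * N ν (averagingError ε I J t)) κ)
        fun ν => N ν (averagingError ε I J t) := by
  have hτ : 0 ≤ ε * t := mul_nonneg hε.le ht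
  simp only [← seminorm_smul_of_pos _ hε]
  refine hN.sub_mulVec_add_le ?_ (hE.𝓖_le _ hτ htU _ hδ κ) (hE.𝓗_le _ hτ htU _ hδ κ)
  simpa only [add_smul_averagingError hε.ne'] using hE.u_sub_le _ hτ htU _ hδ (Θ t) κ

end ErrorEstimators

end Estimators

section MainEstimate

variable {n M : Type*} [Fintype n] [DecidableEq n] [Fintype M] {Λ : Set (n → ℝ)}
  {f : (n → ℝ) → ℝ → n → ℝ} {g : (n → ℝ) → ℝ → ℝ} {ω : (n → ℝ) → ℝ} {θ₀ ε : ℝ}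
  {fbar pbar : (n → ℝ) → n → ℝ} {s sθ p v vθ q w wθ u : (n → ℝ) → ℝ → n → ℝ}
  {sI vI wI : (n → ℝ) → ℝ → (n → ℝ) →L[ℝ] n → ℝ} {F' 𝓜 : (n → ℝ) → Matrix n n ℝ}
  {F'' : (n → ℝ) → n → n → n → ℝ} {𝓖 : (n → ℝ) → (n → ℝ) → Matrix n n ℝ}
  {𝓗 : (n → ℝ) → (n → ℝ) → n → n → n → ℝ} {U : EReal} {I₀ : n → ℝ} {I J K : ℝ → n → ℝ}
  {Θ : ℝ → ℝ} {R : ℝ → Matrix n n ℝ} {N : M → Seminorm ℝ (n → ℝ)}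
  {NT : M → M → Seminorm ℝ (Matrix n n ℝ)} {NT2 : M → M → M → Seminorm ℝ (n → n → n → ℝ)}
  {ρ : ℝ → M → EReal} {a b c : ℝ → (M → ℝ) → M → ℝ} {d : ℝ → (M → ℝ) → M → M → ℝ}
  {e : ℝ → (M → ℝ) → M → M → M → ℝ} {Rb Pb : ℝ → M → M → ℝ}
  (hε : 0 < ε) (hS : OneFrequencySystem Λ f g ω)
  (hX : AuxiliaryFunctions Λ f g ω θ₀ fbar s sI sθ p pbar v vI vθ q w wI wθ u)
  (hA : AveragedFlow Λ fbar F' F'' 𝓜 pbar U I₀ J R K)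
  (hP : PerturbedSolution f g ω ε U I₀ θ₀ I Θ) (hR : TaylorRemainders Λ fbar F' pbar 𝓖 𝓗)
  (hN : ConsistentSeminorms N NT NT2)
  (hE : ErrorEstimators N NT NT2 U ρ (s I₀ θ₀) s v w q u F' 𝓜 𝓖 𝓗 J R K a b c d e Rb Pb)
  (hρ : ∀ τ : ℝ, 0 ≤ τ → (τ : EReal) < U → ∀ x, (∀ μ, (N μ (x - J τ) : EReal) < ρ τ μ) → x ∈ Λ)
  (hL : ∀ t : ℝ, 0 ≤ t → ((ε * t : ℝ) : EReal) < U → ∀ μ,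
    (N μ (ε • averagingError ε I J t) : EReal) < ρ (ε * t) μ)

include hε hS hX hA hP hR hN hE hρ hL

theorem seminorm_correctedError_le (μ : M) {T : ℝ} (hT : 0 ≤ T)
    (hTU : ((ε * T : ℝ) : EReal) < U) :
    N μ (correctedError ε (s I₀ θ₀) s v w F' I Θ J R K T) ≤
      ε ^ 2 * ∑ lam, Rb (ε * T) μ lam * ∫ t in (0 : ℝ)..T, ∑ κ, Pb (ε * t) lam κ *
        remainderEstimator (c (ε * t) (fun ν => ε * N ν (averagingError ε I J t)) κ)
          (d (ε * t) (fun ν => ε * N ν (averagingError ε I J t)) κ)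
          (e (ε * t) (fun ν => ε * N ν (averagingError ε I J t)) κ)
          fun ν => N ν (averagingError ε I J t) := by
  have hτ : ∀ t ∈ Icc 0 T, 0 ≤ ε * t := fun t ht => mul_nonneg hε.le ht.1
  have hτU : ∀ t ∈ Icc 0 T, ((ε * t : ℝ) : EReal) < U := fun t ht =>
    (EReal.coe_le_coe (mul_le_mul_of_nonneg_left ht.2 hε.le)).trans_lt hTU
  have hseg : ∀ t ∈ Icc 0 T, segment ℝ (J (ε * t)) (J (ε * t) + ε • averagingError ε I J t) ⊆ Λ :=
    fun t ht => segment_subset_of_seminorm_lt N (hρ _ (hτ t ht) (hτU t ht)) (hL t ht.1 (hτU t ht))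
  have hJΛ : ∀ t ∈ Icc 0 T, J (ε * t) ∈ Λ := fun t ht => hseg t ht (left_mem_segment ℝ _ _)
  have hI₀ : I₀ ∈ Λ := by simpa [hA.J_zero] using hJΛ 0 (left_mem_Icc.2 hT)
  have hdom : ∀ t ∈ Icc 0 T,
      (ε * t, fun ν => ε * N ν (averagingError ε I J t)) ∈ estimatorDomain U ρ := fun t ht => by
    simp only [← seminorm_smul_of_pos _ hε]
    exact ⟨hτ t ht, hτU t ht, fun ν => ⟨apply_nonneg _ _, hL t ht.1 (hτU t ht) ν⟩⟩
  have hcont := hE.continuousOn_integrand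
    (fun ν => continuousOn_seminorm_averagingError hε hA hP (N ν) (fun t ht => ht.1) hτU) hdom
  have hduhamel := seminorm_le_of_hasDerivAt_mulVec_add (R := fun t => R (ε * t)) (μ := μ)
    hN.mulVec_le hT ((hA.continuousOn_rescaled_jacobian hτ hτU hJΛ).const_smul ε)
    (by simpa using hA.R_zero)
    (fun t ht => hA.hasDerivAt_rescaled_R (hτ t ht) (hτU t ht))
    (correctedError_zero hX hA hP hI₀)
    (fun t ht => hasDerivAt_correctedError hε hS hX hA hP hR ht.1 (hτU t ht) (hseg t ht))
    (hE.R_le _ (hτ T (right_mem_Icc.2 hT)) hTU μ)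
    (fun t ht => hE.R_inv_le _ (hτ t ht) (hτU t ht))
    (fun t ht κ => (seminorm_smul_of_pos _ (pow_pos hε 2) _).trans_le
      (mul_le_mul_of_nonneg_left
        (hE.correctionForcing_le hN hε ht.1 (hτU t ht) (hL t ht.1 (hτU t ht)) κ) (sq_nonneg ε)))
    (fun lam => by
      simpa only [mul_left_comm _ (ε ^ 2), ← Finset.mul_sum] using (hcont lam).const_mul (ε ^ 2))
  simpa only [mul_left_comm _ (ε ^ 2), ← Finset.mul_sum, intervalIntegral.integral_const_mul]
    using hduhamel

theorem averaging_error_seminorm_integral_inequality_general (μ : M) (t : ℝ) (ht : 0 ≤ t)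
    (htU : ((ε * t : ℝ) : EReal) < U) :
    N μ (averagingError ε I J t) ≤
      a (ε * t) (fun ν => ε * N ν (averagingError ε I J t)) μ
        + ε * b (ε * t) (fun ν => ε * N ν (averagingError ε I J t)) μ
        + ε ^ 2 * ∑ lam, Rb (ε * t) μ lam * ∫ t' in (0 : ℝ)..t, ∑ κ, Pb (ε * t') lam κ *
          remainderEstimator (c (ε * t') (fun ν => ε * N ν (averagingError ε I J t')) κ)
            (d (ε * t') (fun ν => ε * N ν (averagingError ε I J t')) κ)
            (e (ε * t') (fun ν => ε * N ν (averagingError ε I J t')) κ)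
            fun ν => N ν (averagingError ε I J t') := by
  exact (hE.averagingError_le hε ht htU (hL t ht htU) μ).trans (add_le_add_right
    (seminorm_correctedError_le hε hS hX hA hP hR hN hE hρ hL μ ht htU) _)

end MainEstimate

end Development

/-- **Seminorm integral inequalities for the averaging error**
(Lemma 2D of Morosi–Pizzocchero).  Under the full one-frequency averaging
framework (perturbed and averaged systems, auxiliary functions, a separating
family of seminorms `N` with consistent families `NT`, `NT2` on tensors, and
the estimator functions `a, b, c, dd, ee, Rb, Pb` on `Γ_ρ`), if the perturbed
solution exists on `[0,U/ε)` and `|L(t)|^μ < ρ^μ(εt)/ε` there, then the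
seminorms of the error satisfy the stated system of integral inequalities. -/
theorem averaging_error_seminorm_integral_inequality
    {d : ℕ} (hd : 1 ≤ d)
    (Λ : Set (Fin d → ℝ)) (hΛ : IsOpen Λ)
    (m : ℕ) (hm : 2 ≤ m)
    (f : (Fin d → ℝ) → ℝ → Fin d → ℝ)
    (g : (Fin d → ℝ) → ℝ → ℝ)
    (ω : (Fin d → ℝ) → ℝ)
    (hf : ContDiffOn ℝ m (fun p : (Fin d → ℝ) × ℝ => f p.1 p.2) (Λ ×ˢ Set.univ))
    (hfper : ∀ I θ, f I (θ + 2 * π) = f I θ)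
    (hg : ContDiffOn ℝ m (fun p : (Fin d → ℝ) × ℝ => g p.1 p.2) (Λ ×ˢ Set.univ))
    (hgper : ∀ I θ, g I (θ + 2 * π) = g I θ)
    (hω : ContDiffOn ℝ m ω Λ)
    (hωne : ∀ I ∈ Λ, ω I ≠ 0)
    (I₀ : Fin d → ℝ) (hI₀ : I₀ ∈ Λ) (θ₀ : ℝ)
    (ε : ℝ) (hε : 0 < ε)
    -- the averaged vector field
    (fbar : (Fin d → ℝ) → Fin d → ℝ)
    (hfbar : ∀ I, fbar I = (2 * π)⁻¹ • ∫ θ in (0:ℝ)..2 * π, f I θ)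
    -- the averaged solution on [0,U)
    (U : EReal) (hU : 0 < U)
    (J : ℝ → Fin d → ℝ)
    (hJ0 : J 0 = I₀)
    (hJmem : ∀ τ : ℝ, 0 ≤ τ → (τ : EReal) < U → J τ ∈ Λ)
    (hJode : ∀ τ : ℝ, 0 ≤ τ → (τ : EReal) < U → HasDerivAt J (fbar (J τ)) τ)
    -- the Jacobian ∂f̄/∂I
    (F' : (Fin d → ℝ) → Matrix (Fin d) (Fin d) ℝ)
    (hF' : ∀ I ∈ Λ, HasFDerivAt fbar (Matrix.mulVecLin (F' I)).toContinuousLinearMap I)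
    -- the auxiliary function s :  f = f̄ + ω ∂s/∂θ,  s̄ = 0
    (s sθ : (Fin d → ℝ) → ℝ → Fin d → ℝ)
    (hsθ : ∀ I ∈ Λ, ∀ θ : ℝ, HasDerivAt (fun θ' => s I θ') (sθ I θ) θ)
    (hs : ∀ I ∈ Λ, ∀ θ : ℝ, f I θ = fbar I + ω I • sθ I θ)
    (hsavg : ∀ I ∈ Λ, (∫ θ in (0:ℝ)..2 * π, s I θ) = 0)
    (sI : (Fin d → ℝ) → ℝ → Matrix (Fin d) (Fin d) ℝ)
    (hsI : ∀ I ∈ Λ, ∀ θ : ℝ,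
      HasFDerivAt (fun I' => s I' θ) (Matrix.mulVecLin (sI I θ)).toContinuousLinearMap I)
    -- p := (∂s/∂I) f + (∂s/∂θ) g  and its average p̄
    (p : (Fin d → ℝ) → ℝ → Fin d → ℝ)
    (hp : ∀ I ∈ Λ, ∀ θ : ℝ, p I θ = sI I θ *ᵥ f I θ + g I θ • sθ I θ)
    (pbar : (Fin d → ℝ) → Fin d → ℝ)
    (hpbar : ∀ I ∈ Λ, pbar I = (2 * π)⁻¹ • ∫ θ in (0:ℝ)..2 * π, p I θ)
    -- R and K : solutions of the linear auxiliary systems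
    (R : ℝ → Matrix (Fin d) (Fin d) ℝ)
    (hR0 : R 0 = 1)
    (hRode : ∀ τ : ℝ, 0 ≤ τ → (τ : EReal) < U → ∀ i j,
      HasDerivAt (fun τ' => R τ' i j) ((F' (J τ) * R τ) i j) τ)
    (K : ℝ → Fin d → ℝ)
    (hK0 : K 0 = 0)
    (hKode : ∀ τ : ℝ, 0 ≤ τ → (τ : EReal) < U →
      HasDerivAt K (F' (J τ) *ᵥ K τ + pbar (J τ)) τ)
    -- v :  s = ω ∂v/∂θ,  v(I,θ₀) = 0
    (v vθ : (Fin d → ℝ) → ℝ → Fin d → ℝ)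
    (hvθ : ∀ I ∈ Λ, ∀ θ : ℝ, HasDerivAt (fun θ' => v I θ') (vθ I θ) θ)
    (hv : ∀ I ∈ Λ, ∀ θ : ℝ, s I θ = ω I • vθ I θ)
    (hv0 : ∀ I ∈ Λ, v I θ₀ = 0)
    (vI : (Fin d → ℝ) → ℝ → Matrix (Fin d) (Fin d) ℝ)
    (hvI : ∀ I ∈ Λ, ∀ θ : ℝ,
      HasFDerivAt (fun I' => v I' θ) (Matrix.mulVecLin (vI I θ)).toContinuousLinearMap I)
    -- q := (∂v/∂I) f + (∂v/∂θ) g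
    (q : (Fin d → ℝ) → ℝ → Fin d → ℝ)
    (hq : ∀ I ∈ Λ, ∀ θ : ℝ, q I θ = vI I θ *ᵥ f I θ + g I θ • vθ I θ)
    -- w :  p = p̄ + ω ∂w/∂θ,  w(I,θ₀) = 0
    (w wθ : (Fin d → ℝ) → ℝ → Fin d → ℝ)
    (hwθ : ∀ I ∈ Λ, ∀ θ : ℝ, HasDerivAt (fun θ' => w I θ') (wθ I θ) θ)
    (hw : ∀ I ∈ Λ, ∀ θ : ℝ, p I θ = pbar I + ω I • wθ I θ)
    (hw0 : ∀ I ∈ Λ, w I θ₀ = 0)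
    (wI : (Fin d → ℝ) → ℝ → Matrix (Fin d) (Fin d) ℝ)
    (hwI : ∀ I ∈ Λ, ∀ θ : ℝ,
      HasFDerivAt (fun I' => w I' θ) (Matrix.mulVecLin (wI I θ)).toContinuousLinearMap I)
    -- u := (∂w/∂I) f + (∂w/∂θ) g
    (u : (Fin d → ℝ) → ℝ → Fin d → ℝ)
    (hu : ∀ I ∈ Λ, ∀ θ : ℝ, u I θ = wI I θ *ᵥ f I θ + g I θ • wθ I θ)
    -- the second derivative ∂²f̄/∂I² and 𝓜 := (∂²f̄/∂I²) f̄ − (∂f̄/∂I)²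
    (F'' : (Fin d → ℝ) → Fin d → Fin d → Fin d → ℝ)
    (hF'' : ∀ I ∈ Λ, ∀ i k, HasFDerivAt (fun I' => F' I' i k)
      (∑ j, F'' I i j k • (ContinuousLinearMap.proj j : (Fin d → ℝ) →L[ℝ] ℝ)) I)
    (𝓜 : (Fin d → ℝ) → Matrix (Fin d) (Fin d) ℝ)
    (h𝓜 : ∀ I ∈ Λ, ∀ i k, 𝓜 I i k = (∑ j, F'' I i j k * fbar I j) - (F' I * F' I) i k)
    -- 𝓖 and 𝓗 on Λ†
    (𝓖 : (Fin d → ℝ) → (Fin d → ℝ) → Matrix (Fin d) (Fin d) ℝ)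
    (h𝓖 : ∀ I δI : Fin d → ℝ, segment ℝ I (I + δI) ⊆ Λ →
      pbar (I + δI) = pbar I + 𝓖 I δI *ᵥ δI)
    (𝓗 : (Fin d → ℝ) → (Fin d → ℝ) → Fin d → Fin d → Fin d → ℝ)
    (h𝓗 : ∀ I δI : Fin d → ℝ, segment ℝ I (I + δI) ⊆ Λ →
      fbar (I + δI) = fbar I + F' I *ᵥ δI +
        (1/2 : ℝ) • (fun i => ∑ j, ∑ k, 𝓗 I δI i j k * δI j * δI k))
    (h𝓗symm : ∀ I δI : Fin d → ℝ, segment ℝ I (I + δI) ⊆ Λ →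
      ∀ i j k, 𝓗 I δI i j k = 𝓗 I δI i k j)
    -- a separating family of seminorms on ℝ^d …
    {M : Type*} [Fintype M] [Nonempty M]
    (N : M → Seminorm ℝ (Fin d → ℝ))
    (hNsep : ∀ X : Fin d → ℝ, (∀ μ, N μ X = 0) → X = 0)
    -- … with consistent families on T¹₁(ℝ^d) and T¹₂(ℝ^d)
    (NT : M → M → Seminorm ℝ (Matrix (Fin d) (Fin d) ℝ))
    (hNT : ∀ (A : Matrix (Fin d) (Fin d) ℝ) (X : Fin d → ℝ) (μ : M),
      N μ (A *ᵥ X) ≤ ∑ ν, NT μ ν A * N ν X)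
    (NT2 : M → M → M → Seminorm ℝ (Fin d → Fin d → Fin d → ℝ))
    (hNT2 : ∀ (C : Fin d → Fin d → Fin d → ℝ) (X Y : Fin d → ℝ) (μ : M),
      N μ (fun i => ∑ j, ∑ k, C i j k * X j * Y k) ≤
        ∑ ν, ∑ κ, NT2 μ ν κ C * N ν X * N κ Y)
    -- ρ : [0,U) → [0,+∞]^M with B(J(τ),ρ(τ)) ⊆ Λ ; the set Γ_ρ
    (ρ : ℝ → M → EReal)
    (hρnonneg : ∀ τ : ℝ, 0 ≤ τ → (τ : EReal) < U → ∀ μ, 0 ≤ ρ τ μ)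
    (hρcont : ∀ μ, ContinuousOn (fun τ => ρ τ μ) {τ : ℝ | 0 ≤ τ ∧ (τ : EReal) < U})
    (hρB : ∀ τ : ℝ, 0 ≤ τ → (τ : EReal) < U → ∀ I : Fin d → ℝ,
      (∀ μ, ((N μ (I - J τ) : ℝ) : EReal) < ρ τ μ) → I ∈ Λ)
    (Γ : Set (ℝ × (M → ℝ)))
    (hΓ : Γ = {pr : ℝ × (M → ℝ) | 0 ≤ pr.1 ∧ ((pr.1 : ℝ) : EReal) < U ∧
      ∀ μ, 0 ≤ pr.2 μ ∧ ((pr.2 μ : ℝ) : EReal) < ρ pr.1 μ})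
    -- the estimators a, b, c, d, e on Γ_ρ
    (a b c : ℝ → (M → ℝ) → M → ℝ)
    (dd : ℝ → (M → ℝ) → M → M → ℝ)
    (ee : ℝ → (M → ℝ) → M → M → M → ℝ)
    (hacont : ∀ μ, ContinuousOn (fun pr : ℝ × (M → ℝ) => a pr.1 pr.2 μ) Γ)
    (hbcont : ∀ μ, ContinuousOn (fun pr : ℝ × (M → ℝ) => b pr.1 pr.2 μ) Γ)
    (hccont : ∀ μ, ContinuousOn (fun pr : ℝ × (M → ℝ) => c pr.1 pr.2 μ) Γ)
    (hdcont : ∀ μ ν, ContinuousOn (fun pr : ℝ × (M → ℝ) => dd pr.1 pr.2 μ ν) Γ)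
    (hecont : ∀ μ ν κ, ContinuousOn (fun pr : ℝ × (M → ℝ) => ee pr.1 pr.2 μ ν κ) Γ)
    (hanonneg : ∀ τ r, (τ, r) ∈ Γ → ∀ μ, 0 ≤ a τ r μ)
    (hbnonneg : ∀ τ r, (τ, r) ∈ Γ → ∀ μ, 0 ≤ b τ r μ)
    (hcnonneg : ∀ τ r, (τ, r) ∈ Γ → ∀ μ, 0 ≤ c τ r μ)
    (hdnonneg : ∀ τ r, (τ, r) ∈ Γ → ∀ μ ν, 0 ≤ dd τ r μ ν)
    (henonneg : ∀ τ r, (τ, r) ∈ Γ → ∀ μ ν κ, 0 ≤ ee τ r μ ν κ)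
    (ha : ∀ τ : ℝ, 0 ≤ τ → (τ : EReal) < U → ∀ δJ : Fin d → ℝ,
      (∀ μ, ((N μ δJ : ℝ) : EReal) < ρ τ μ) → ∀ (θ : ℝ) (μ : M),
      N μ (s (J τ + δJ) θ - R τ *ᵥ s I₀ θ₀ - K τ) ≤ a τ (fun lam => N lam δJ) μ)
    (hb : ∀ τ : ℝ, 0 ≤ τ → (τ : EReal) < U → ∀ δJ : Fin d → ℝ,
      (∀ μ, ((N μ δJ : ℝ) : EReal) < ρ τ μ) → ∀ (θ : ℝ) (μ : M),
      N μ (w (J τ + δJ) θ - F' (J τ) *ᵥ v (J τ + δJ) θ) ≤ b τ (fun lam => N lam δJ) μ)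
    (hc : ∀ τ : ℝ, 0 ≤ τ → (τ : EReal) < U → ∀ δJ : Fin d → ℝ,
      (∀ μ, ((N μ δJ : ℝ) : EReal) < ρ τ μ) → ∀ (θ : ℝ) (μ : M),
      N μ (u (J τ + δJ) θ - F' (J τ) *ᵥ (w (J τ + δJ) θ + q (J τ + δJ) θ)
          - 𝓜 (J τ) *ᵥ v (J τ + δJ) θ) ≤ c τ (fun lam => N lam δJ) μ)
    (hdbound : ∀ τ : ℝ, 0 ≤ τ → (τ : EReal) < U → ∀ δJ : Fin d → ℝ,
      (∀ μ, ((N μ δJ : ℝ) : EReal) < ρ τ μ) → ∀ μ ν,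
      NT μ ν (𝓖 (J τ) δJ) ≤ dd τ (fun lam => N lam δJ) μ ν)
    (hebound : ∀ τ : ℝ, 0 ≤ τ → (τ : EReal) < U → ∀ δJ : Fin d → ℝ,
      (∀ μ, ((N μ δJ : ℝ) : EReal) < ρ τ μ) → ∀ μ ν κ,
      NT2 μ ν κ (𝓗 (J τ) δJ) ≤ ee τ (fun lam => N lam δJ) μ ν κ)
    -- monotonicity of c, d, e in r
    (hcmono : ∀ τ r r', (τ, r) ∈ Γ → (τ, r') ∈ Γ → (∀ lam, r lam ≤ r' lam) →
      ∀ μ, c τ r μ ≤ c τ r' μ)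
    (hdmono : ∀ τ r r', (τ, r) ∈ Γ → (τ, r') ∈ Γ → (∀ lam, r lam ≤ r' lam) →
      ∀ μ ν, dd τ r μ ν ≤ dd τ r' μ ν)
    (hemono : ∀ τ r r', (τ, r) ∈ Γ → (τ, r') ∈ Γ → (∀ lam, r lam ≤ r' lam) →
      ∀ μ ν κ, ee τ r μ ν κ ≤ ee τ r' μ ν κ)
    -- the combined estimators α and γ
    (α : ℝ → (M → ℝ) → M → ℝ)
    (hα : ∀ τ r μ, α τ r μ = a τ r μ + ε * b τ r μ)
    (γ : ℝ → (M → ℝ) → (M → ℝ) → M → ℝ)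
    (hγ : ∀ τ r ℓ μ, γ τ r ℓ μ = c τ r μ + (∑ ν, dd τ r μ ν * ℓ ν)
      + (1/2 : ℝ) * ∑ ν, ∑ κ, ee τ r μ ν κ * ℓ ν * ℓ κ)
    -- bounds R^μ_ν, P^μ_ν for the seminorms of R(τ), R(τ)⁻¹
    (Rb Pb : ℝ → M → M → ℝ)
    (hRbcont : ∀ μ ν, ContinuousOn (fun τ => Rb τ μ ν) {τ : ℝ | 0 ≤ τ ∧ (τ : EReal) < U})
    (hPbcont : ∀ μ ν, ContinuousOn (fun τ => Pb τ μ ν) {τ : ℝ | 0 ≤ τ ∧ (τ : EReal) < U})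
    (hRbnonneg : ∀ τ : ℝ, 0 ≤ τ → (τ : EReal) < U → ∀ μ ν, 0 ≤ Rb τ μ ν)
    (hPbnonneg : ∀ τ : ℝ, 0 ≤ τ → (τ : EReal) < U → ∀ μ ν, 0 ≤ Pb τ μ ν)
    (hRb : ∀ τ : ℝ, 0 ≤ τ → (τ : EReal) < U → ∀ μ ν, NT μ ν (R τ) ≤ Rb τ μ ν)
    (hPb : ∀ τ : ℝ, 0 ≤ τ → (τ : EReal) < U → ∀ μ ν, NT μ ν ((R τ)⁻¹) ≤ Pb τ μ ν)
    -- the perturbed solution on [0, U/ε)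
    (Ifun : ℝ → Fin d → ℝ) (Θ : ℝ → ℝ)
    (hIinit : Ifun 0 = I₀) (hΘinit : Θ 0 = θ₀)
    (hIode : ∀ t : ℝ, 0 ≤ t → ((ε * t : ℝ) : EReal) < U →
      HasDerivAt Ifun (ε • f (Ifun t) (Θ t)) t)
    (hΘode : ∀ t : ℝ, 0 ≤ t → ((ε * t : ℝ) : EReal) < U →
      HasDerivAt Θ (ω (Ifun t) + ε * g (Ifun t) (Θ t)) t)
    -- the error function and the assumption |L(t)|^μ < ρ^μ(εt)/ε
    (L : ℝ → Fin d → ℝ)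
    (hL : ∀ t, L t = ε⁻¹ • (Ifun t - J (ε * t)))
    (hLlt : ∀ t : ℝ, 0 ≤ t → ((ε * t : ℝ) : EReal) < U → ∀ μ,
      ((ε * N μ (L t) : ℝ) : EReal) < ρ (ε * t) μ) :
    ∀ (μ : M) (t : ℝ), 0 ≤ t → ((ε * t : ℝ) : EReal) < U →
      N μ (L t) ≤ α (ε * t) (fun ν => ε * N ν (L t)) μ
        + ε ^ 2 * ∑ lam, Rb (ε * t) μ lam *
            ∫ t' in (0:ℝ)..t, ∑ κ, Pb (ε * t') lam κ *
              γ (ε * t') (fun ν => ε * N ν (L t')) (fun ν => N ν (L t')) κ := by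
  obtain rfl : L = averagingError ε Ifun J := funext hL
  have hf₁ : ContDiffOn ℝ 1 (Function.uncurry f) (Λ ×ˢ Set.univ) :=
    hf.of_le (by exact_mod_cast (by lia : 1 ≤ m))
  have hω₁ : ContDiffOn ℝ 1 ω Λ := hω.of_le (by exact_mod_cast (by lia : 1 ≤ m))
  subst hΓ
  simp only [hα, hγ]
  exact averaging_error_seminorm_integral_inequality_general hε
    ⟨hΛ, hf₁, hg.continuousOn, hω₁, hωne⟩
    (sI := fun I θ => (mulVecLin (sI I θ)).toContinuousLinearMap)
    (vI := fun I θ => (mulVecLin (vI I θ)).toContinuousLinearMap)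
    (wI := fun I θ => (mulVecLin (wI I θ)).toContinuousLinearMap)
    ⟨fun I _ => hfbar I, ⟨hsI, hsθ⟩, hs, hsavg, hp, hpbar, ⟨hvI, hvθ⟩, hv, hv0, hq, ⟨hwI, hwθ⟩,
      hw, hw0, hu⟩
    ⟨hF', hF'', h𝓜, hJ0, hJode, hR0, hRode, hK0, hKode⟩ ⟨hIinit, hΘinit, hIode, hΘode⟩
    ⟨h𝓖, h𝓗⟩ ⟨hNT, hNT2⟩
    ⟨hccont, hdcont, hecont, hPbcont, ha, hb, hc, hdbound, hebound, hRb, hPb⟩ hρB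
    (by simpa only [seminorm_smul_of_pos _ hε] using hLlt)
end
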